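/- There exists a constant C_p > 0 depending only on p such that for all t ∈ [0,1], sup_{x ∈ ℝ} | P( S_n / √( t·⟨S⟩_n + (1 − t)·[S]_n ) ≤ x ) − Φ(x) | ≤ C_p · N_n^{1/(2p+1)}. (This interpolates between the Berry–Esseen bound for the normalized martingale S_n/√⟨S⟩_n at t = 1 and for the self-normalized martingale S_n/√[S]_n at t = 0.) -/

import Mathlib

open MeasureTheory Filter Finset

/-- The standard normal distribution function
`Φ(x) = (2π)^{-1/2} ∫_{-∞}^x e^{-u²/2} du`. -/
noncomputable def stdNormalCDF (x : ℝ) : ℝ :=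
  ∫ u in Set.Iic x, (Real.sqrt (2 * Real.pi))⁻¹ * Real.exp (-u ^ 2 / 2)

namespace MBE

/-- standard normal density -/
noncomputable def phi (u : ℝ) : ℝ := (Real.sqrt (2 * Real.pi))⁻¹ * Real.exp (-u ^ 2 / 2)

lemma phi_cont : Continuous phi := by unfold phi; fun_prop

lemma phi_eq : phi = ProbabilityTheory.gaussianPDFReal 0 1 := by
  funext u
  simp [phi, ProbabilityTheory.gaussianPDFReal]

lemma phi_integrable : Integrable phi := by
  rw [phi_eq]; exact ProbabilityTheory.integrable_gaussianPDFReal 0 1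

lemma phi_integral : ∫ u, phi u = 1 := by
  rw [phi_eq]; exact ProbabilityTheory.integral_gaussianPDFReal_eq_one 0 one_ne_zero

lemma phi_nonneg (u : ℝ) : 0 ≤ phi u := by unfold phi; positivity

lemma c_le : (Real.sqrt (2 * Real.pi))⁻¹ ≤ 1 / 2 := by
  have h : (2:ℝ) ≤ Real.sqrt (2 * Real.pi) := by
    apply Real.le_sqrt_of_sq_le; nlinarith [Real.pi_gt_three]
  rw [one_div]; exact inv_anti₀ (by norm_num) h

lemma phi_le_exp (u : ℝ) : phi u ≤ Real.exp (-u ^ 2 / 2) := by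
  unfold phi
  have := c_le
  nlinarith [Real.exp_pos (-u^2/2)]

lemma phi_le_one (u : ℝ) : phi u ≤ 1 := by
  refine (phi_le_exp u).trans ?_
  rw [Real.exp_le_one_iff]; nlinarith [sq_nonneg u]

lemma cdf_eq (x : ℝ) : stdNormalCDF x = ∫ u in Set.Iic x, phi u := rfl

lemma cdf_sub (a b : ℝ) : stdNormalCDF b - stdNormalCDF a = ∫ u in a..b, phi u := by
  rw [cdf_eq, cdf_eq]
  exact intervalIntegral.integral_Iic_sub_Iic phi_integrable.integrableOn phi_integrable.integrableOn

lemma cdf_deriv (x : ℝ) : HasDerivAt stdNormalCDF (phi x) x := by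
  have h : stdNormalCDF = fun y => stdNormalCDF 0 + ∫ u in (0:ℝ)..y, phi u := by
    funext y; rw [← cdf_sub]; ring
  rw [h]
  exact (intervalIntegral.integral_hasDerivAt_right (phi_cont.intervalIntegrable _ _)
    (phi_cont.stronglyMeasurableAtFilter _ _) phi_cont.continuousAt).const_add _

lemma cdf_nonneg (x : ℝ) : 0 ≤ stdNormalCDF x := by
  rw [cdf_eq]; exact integral_nonneg (fun u => phi_nonneg u)

lemma cdf_le_one (x : ℝ) : stdNormalCDF x ≤ 1 := by
  rw [cdf_eq, ← phi_integral]
  exact setIntegral_le_integral phi_integrable (ae_of_all _ phi_nonneg)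

lemma cdf_neg (x : ℝ) : stdNormalCDF (-x) = 1 - stdNormalCDF x := by
  have h1 : ∫ u in Set.Iic (-x), phi u = ∫ u in Set.Ioi x, phi u := by
    rw [← integral_comp_neg_Ioi]
    simp only [phi, neg_sq]
  have h2 := integral_add_compl (μ := volume) (f := phi) (measurableSet_Iic (a := x)) phi_integrable
  rw [phi_integral, Set.compl_Iic] at h2
  rw [cdf_eq, cdf_eq, h1]; linarith

lemma cdf_mono : Monotone stdNormalCDF :=
  monotone_of_deriv_nonneg (fun x => (cdf_deriv x).differentiableAt)
    (fun x => by rw [(cdf_deriv x).deriv]; exact phi_nonneg x)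

lemma cdf_meas : Measurable stdNormalCDF := cdf_mono.measurable

/-- iterated mean value with sloppy constant -/
lemma mv_bound {g g' : ℝ → ℝ} {M : ℝ} (hM : 0 ≤ M) (hg : ∀ t, HasDerivAt g (g' t) t)
    (hb : ∀ t ∈ Set.Icc (0:ℝ) 1, |g' t| ≤ M) : ∀ t ∈ Set.Icc (0:ℝ) 1, |g t - g 0| ≤ M := by
  intro t ht
  have := (convex_Icc (0:ℝ) 1).norm_image_sub_le_of_norm_hasDerivWithin_le
    (f := g) (f' := g') (C := M) (fun x _ => (hg x).hasDerivWithinAt) (fun x hx => hb x hx)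
    (Set.left_mem_Icc.2 zero_le_one) ht
  rw [Real.norm_eq_abs, Real.norm_eq_abs, sub_zero, abs_of_nonneg ht.1] at this
  nlinarith [ht.2]

lemma taylor1 {f f' : ℝ → ℝ} (hf : ∀ t, HasDerivAt f (f' t) t) (y h M : ℝ) (hM : 0 ≤ M)
    (hb : ∀ t ∈ Set.Icc (0:ℝ) 1, |f' (y + t * h)| ≤ M) :
    |f (y + h) - f y| ≤ M * |h| := by
  have hd : ∀ t, HasDerivAt (fun t => f (y + t * h)) (f' (y + t * h) * h) t := fun t => by
    have : HasDerivAt (fun t => y + t * h) h t := by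
      simpa using ((hasDerivAt_id t).mul_const h).const_add y
    exact (hf _).comp t this
  have := mv_bound (M := M * |h|) (by positivity) hd (fun t ht => by
    rw [abs_mul]; exact mul_le_mul_of_nonneg_right (hb t ht) (abs_nonneg _)) 1 (by simp)
  simpa using this

lemma taylor2 {f f' f'' : ℝ → ℝ} (hf : ∀ t, HasDerivAt f (f' t) t)
    (hf' : ∀ t, HasDerivAt f' (f'' t) t) (y h M : ℝ) (hM : 0 ≤ M)
    (hb : ∀ t ∈ Set.Icc (0:ℝ) 1, |f'' (y + t * h)| ≤ M) :
    |f (y + h) - f y - f' y * h| ≤ M * h ^ 2 := by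
  have hlin : ∀ t, HasDerivAt (fun t => y + t * h) h t := fun t => by
      simpa using ((hasDerivAt_id t).mul_const h).const_add y
  have h1 : ∀ t ∈ Set.Icc (0:ℝ) 1, |f' (y + t * h) * h - f' y * h| ≤ M * h ^ 2 := by
    have hd : ∀ t, HasDerivAt (fun t => f' (y + t * h) * h) (f'' (y + t * h) * h * h) t :=
      fun t => ((hf' _).comp t (hlin t)).mul_const h
    have := mv_bound (M := M * h ^ 2) (by positivity) hd (fun t ht => by
      rw [mul_assoc, abs_mul, abs_mul_self, pow_two]
      exact mul_le_mul_of_nonneg_right (hb t ht) (mul_self_nonneg _))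
    simpa using this
  have hd : ∀ t, HasDerivAt (fun t => f (y + t * h) - f' y * h * t)
      (f' (y + t * h) * h - f' y * h) t := fun t => by
    have := ((hf _).comp t (hlin t)).sub ((hasDerivAt_id t).const_mul (f' y * h))
    exact this.congr_deriv (by ring)
  have := mv_bound (M := M * h ^ 2) (by positivity) hd h1 1 (by simp)
  simp only [one_mul, zero_mul, add_zero, mul_one, mul_zero, sub_zero] at this
  rwa [sub_right_comm] at this

lemma taylor3 {f f' f'' f''' : ℝ → ℝ} (hf : ∀ t, HasDerivAt f (f' t) t)
    (hf' : ∀ t, HasDerivAt f' (f'' t) t) (hf'' : ∀ t, HasDerivAt f'' (f''' t) t)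
    (y h M : ℝ) (hM : 0 ≤ M)
    (hb : ∀ t ∈ Set.Icc (0:ℝ) 1, |f''' (y + t * h)| ≤ M) :
    |f (y + h) - f y - f' y * h - f'' y / 2 * h ^ 2| ≤ M * |h| ^ 3 := by
  have hlin : ∀ t, HasDerivAt (fun t => y + t * h) h t := fun t => by
      simpa using ((hasDerivAt_id t).mul_const h).const_add y
  have h0 : ∀ t ∈ Set.Icc (0:ℝ) 1, |f' (y + t * h) * h - f' y * h - f'' y * h ^ 2 * t|
      ≤ M * |h| ^ 3 := by
    intro t ht
    have h2 := taylor2 hf' hf'' y (t * h) M hM (fun s hs => by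
      rw [← mul_assoc]
      exact hb _ ⟨mul_nonneg hs.1 ht.1, mul_le_one₀ hs.2 ht.1 ht.2⟩)
    have e : f' (y + t * h) * h - f' y * h - f'' y * h ^ 2 * t
        = (f' (y + t * h) - f' y - f'' y * (t * h)) * h := by ring
    rw [e, abs_mul]
    calc _ ≤ M * (t * h) ^ 2 * |h| := mul_le_mul_of_nonneg_right h2 (abs_nonneg _)
      _ = M * |h| ^ 3 * t ^ 2 := by rw [pow_succ |h| 2, sq_abs]; ring
      _ ≤ M * |h| ^ 3 * 1 := by
          apply mul_le_mul_of_nonneg_left _ (by positivity)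
          exact pow_le_one₀ ht.1 ht.2
      _ = _ := mul_one _
  have hd : ∀ t, HasDerivAt (fun t => f (y + t * h) - f' y * h * t - f'' y * h ^ 2 / 2 * t ^ 2)
      (f' (y + t * h) * h - f' y * h - f'' y * h ^ 2 * t) t := fun t => by
    have := (((hf _).comp t (hlin t)).sub ((hasDerivAt_id t).const_mul (f' y * h))).sub
      ((hasDerivAt_pow 2 t).const_mul (f'' y * h ^ 2 / 2))
    exact this.congr_deriv (by norm_num; ring)
  have := mv_bound (M := M * |h| ^ 3) (by positivity) hd h0 1 (by simp)
  simp only [one_mul, zero_mul, add_zero, mul_one, mul_zero, sub_zero, one_pow] at this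
  convert this using 2
  simp
  ring

end MBE

namespace MBE

/-- the window function -/
noncomputable def W (a y : ℝ) : ℝ := (1 + y ^ 2) ^ (-a)

lemma W_pos (a y : ℝ) : 0 < W a y := by unfold W; positivity

lemma W_le_one {a : ℝ} (ha : 0 ≤ a) (y : ℝ) : W a y ≤ 1 := by
  unfold W
  exact Real.rpow_le_one_of_one_le_of_nonpos (by nlinarith [sq_nonneg y]) (by linarith)

lemma W_succ (a y : ℝ) : W (a + 1) y * (1 + y ^ 2) = W a y := by
  unfold W
  have h : (0:ℝ) < 1 + y ^ 2 := by positivity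
  rw [← Real.rpow_add_one h.ne']; congr 1; ring

lemma W_antitone {a c : ℝ} (h : a ≤ c) (y : ℝ) : W c y ≤ W a y := by
  unfold W
  exact Real.rpow_le_rpow_of_exponent_le (by nlinarith [sq_nonneg y]) (by linarith)

lemma W_one (y : ℝ) : W 1 y = (1 + y ^ 2)⁻¹ := by
  unfold W; rw [Real.rpow_neg_one]

lemma W_meas (a : ℝ) : Measurable (W a) := by unfold W; fun_prop

lemma W_deriv (a y : ℝ) : HasDerivAt (W a) (-2 * a * y * W (a + 1) y) y := by
  have h : HasDerivAt (fun y : ℝ => 1 + y ^ 2) (2 * y) y := by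
    simpa using (hasDerivAt_pow 2 y).const_add 1
  have h2 := h.rpow_const (p := -a) (Or.inl (by positivity))
  refine h2.congr_deriv ?_
  unfold W
  rw [show -a - 1 = -(a + 1) by ring]; ring

noncomputable def W1 (m y : ℝ) : ℝ := -2 * m * y * W (m + 1) y
noncomputable def W2 (m y : ℝ) : ℝ := -2 * m * W (m + 1) y + 4 * m * (m + 1) * y ^ 2 * W (m + 2) y
noncomputable def W3 (m y : ℝ) : ℝ := 12 * m * (m + 1) * y * W (m + 2) y
  - 8 * m * (m + 1) * (m + 2) * y ^ 3 * W (m + 3) y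

lemma W_d1 (m y : ℝ) : HasDerivAt (W m) (W1 m y) y := W_deriv m y

lemma W_d2 (m y : ℝ) : HasDerivAt (W1 m) (W2 m y) y := by
  have := ((hasDerivAt_id y).const_mul (-2 * m)).mul (W_deriv (m + 1) y)
  refine this.congr_deriv ?_
  unfold W2
  rw [show m + 1 + 1 = m + 2 by ring]; simp; ring

lemma W_d3 (m y : ℝ) : HasDerivAt (W2 m) (W3 m y) y := by
  have := ((W_deriv (m + 1) y).const_mul (-2 * m)).add
    (((hasDerivAt_pow 2 y).const_mul (4 * m * (m + 1))).mul (W_deriv (m + 2) y))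
  refine this.congr_deriv ?_
  unfold W3
  rw [show m + 1 + 1 = m + 2 by ring, show m + 2 + 1 = m + 3 by ring]; simp; ring

lemma W2_bound {m : ℝ} (h0 : 0 ≤ m) (h1 : m ≤ 1) (y : ℝ) : |W2 m y| ≤ 10 * W m y := by
  have e1 := W_succ m y
  have e2 := W_succ (m + 1) y
  rw [show m + 1 + 1 = m + 2 by ring] at e2
  have p2 := W_pos (m + 2) y
  have p1 := W_pos (m + 1) y
  have i2 : y ^ 2 * W (m + 2) y ≤ W (m + 1) y := by nlinarith
  have i2' : 0 ≤ y ^ 2 * W (m + 2) y := by positivity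
  have i1 : W (m + 1) y ≤ W m y := W_antitone (by linarith) y
  have hm2 : m * (m + 1) ≤ 2 := by nlinarith
  have hm3 : 0 ≤ m * (m + 1) := by nlinarith
  unfold W2
  rw [abs_le]; constructor
  · have : m * W (m + 1) y ≤ W m y := by nlinarith
    have : 0 ≤ m * (m + 1) * (y ^ 2 * W (m + 2) y) := by positivity
    have := W_pos m y
    nlinarith
  · have : 0 ≤ m * W (m + 1) y := by positivity
    have : m * (m + 1) * (y ^ 2 * W (m + 2) y) ≤ 2 * W m y := by
      apply mul_le_mul hm2 (by linarith) i2' (by norm_num)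
    have := W_pos m y
    nlinarith

lemma W2_lower {m : ℝ} (h0 : 0 ≤ m) (y : ℝ) : -2 * m * W (m + 1) y ≤ W2 m y := by
  unfold W2
  have := W_pos (m + 2) y
  have : 0 ≤ 4 * m * (m + 1) * y ^ 2 * W (m + 2) y := by positivity
  linarith

lemma abs_le_one_add_sq (y : ℝ) : |y| ≤ 1 + y ^ 2 := by
  rw [← sq_abs]; nlinarith [sq_nonneg (|y| - 1), abs_nonneg y]

lemma W3_bound {m : ℝ} (h0 : 0 ≤ m) (h1 : m ≤ 1) (y : ℝ) : |W3 m y| ≤ 72 * W m y := by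
  have e1 := W_succ m y
  have e2 := W_succ (m + 1) y
  have e3 := W_succ (m + 2) y
  rw [show m + 1 + 1 = m + 2 by ring] at e2
  rw [show m + 2 + 1 = m + 3 by ring] at e3
  have p3 := W_pos (m + 3) y
  have p2 := W_pos (m + 2) y
  have p1 := W_pos (m + 1) y
  have p0 := W_pos m y
  have hy := abs_le_one_add_sq y
  have j3 : y ^ 2 * W (m + 3) y ≤ W (m + 2) y := by nlinarith
  have j2 : |y| * W (m + 2) y ≤ W (m + 1) y := by nlinarith
  have i1 : W (m + 1) y ≤ W m y := W_antitone (by linarith) y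
  have a1 : |12 * m * (m + 1) * y * W (m + 2) y| ≤ 24 * W m y := by
    rw [abs_mul, abs_mul, abs_of_nonneg (by positivity : (0:ℝ) ≤ 12 * m * (m + 1)), abs_of_pos p2,
      mul_assoc]
    apply mul_le_mul (by nlinarith) (by linarith) (by positivity) (by norm_num)
  have a2 : |8 * m * (m + 1) * (m + 2) * y ^ 3 * W (m + 3) y| ≤ 48 * W m y := by
    rw [abs_mul, abs_mul, abs_of_nonneg (by positivity : (0:ℝ) ≤ 8 * m * (m + 1) * (m + 2)),
      abs_of_pos p3, mul_assoc]
    apply mul_le_mul _ _ (by positivity) (by norm_num)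
    · have : m * (m + 1) ≤ 2 := by nlinarith
      have : m * (m + 1) * (m + 2) ≤ 6 := by nlinarith
      linarith
    · rw [abs_pow, pow_succ, sq_abs]
      calc y ^ 2 * |y| * W (m + 3) y = |y| * (y ^ 2 * W (m + 3) y) := by ring
        _ ≤ |y| * W (m + 2) y := by gcongr
        _ ≤ W m y := by linarith
  unfold W3
  have := abs_sub (12 * m * (m + 1) * y * W (m + 2) y) (8 * m * (m + 1) * (m + 2) * y ^ 3 * W (m + 3) y)
  linarith

lemma W_harnack {m : ℝ} (h0 : 0 ≤ m) (h1 : m ≤ 1) (y h : ℝ) (hh : |h| ≤ 1) :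
    W m (y + h) ≤ 3 * W m y := by
  have hh2 : h ^ 2 ≤ 1 := by rw [← sq_abs]; exact pow_le_one₀ (abs_nonneg _) hh
  have key : (1 + y ^ 2) ≤ 3 * (1 + (y + h) ^ 2) := by nlinarith [sq_nonneg (y + 2 * h)]
  unfold W
  rw [Real.rpow_neg (by positivity), Real.rpow_neg (by positivity)]
  have h3 : (1 + y ^ 2) ^ m ≤ 3 * (1 + (y + h) ^ 2) ^ m := by
    calc (1 + y ^ 2) ^ m ≤ (3 * (1 + (y + h) ^ 2)) ^ m := by gcongr
      _ = 3 ^ m * (1 + (y + h) ^ 2) ^ m := Real.mul_rpow (by norm_num) (by positivity)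
      _ ≤ 3 * (1 + (y + h) ^ 2) ^ m := by
        gcongr
        calc (3:ℝ) ^ m ≤ 3 ^ (1:ℝ) := Real.rpow_le_rpow_of_exponent_le (by norm_num) h1
          _ = 3 := Real.rpow_one 3
  have pa : 0 < (1 + y ^ 2) ^ m := by positivity
  have pb : 0 < (1 + (y + h) ^ 2) ^ m := by positivity
  rw [← one_div, ← div_eq_mul_inv, div_le_div_iff₀ pb pa]; linarith

/-- polynomial-times-Gaussian is dominated by the window -/
lemma exp_dom {m : ℝ} (h1 : m ≤ 1) (y : ℝ) :
    (1 + y ^ 2) ^ 2 * Real.exp (-y ^ 2 / 4) ≤ 1200 * W m y := by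
  have h := Real.pow_div_factorial_le_exp ((1 + y ^ 2) / 4) (by positivity) 3
  have e : Real.exp ((1 + y ^ 2) / 4) * Real.exp (-y ^ 2 / 4) = Real.exp (1 / 4) := by
    rw [← Real.exp_add]; congr 1; ring
  have e1 : Real.exp (1 / 4) ≤ 3 := by
    have : Real.exp (1 / 4) ≤ Real.exp 1 := Real.exp_le_exp.2 (by norm_num)
    linarith [Real.exp_one_lt_d9]
  have h2 : (1 + y ^ 2) ^ 3 * Real.exp (-y ^ 2 / 4) ≤ 1200 := by
    have hp := Real.exp_pos (-y ^ 2 / 4)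
    have : (1 + y ^ 2) ^ 3 ≤ 384 * Real.exp ((1 + y ^ 2) / 4) := by
      norm_num [Nat.factorial] at h; linarith
    nlinarith
  have h3 : (1 + y ^ 2)⁻¹ ≤ W m y := by rw [← W_one]; exact W_antitone h1 y
  have hB : 0 < 1 + y ^ 2 := by positivity
  calc (1 + y ^ 2) ^ 2 * Real.exp (-y ^ 2 / 4)
      = ((1 + y ^ 2) ^ 3 * Real.exp (-y ^ 2 / 4)) * (1 + y ^ 2)⁻¹ := by field_simp
    _ ≤ 1200 * W m y := by gcongr

lemma exp_half_le (y : ℝ) : phi y ≤ Real.exp (-y ^ 2 / 4) :=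
  (phi_le_exp y).trans (Real.exp_le_exp.2 (by nlinarith [sq_nonneg y]))

lemma phi_d1 (y : ℝ) : HasDerivAt phi (-y * phi y) y := by
  have h : HasDerivAt (fun u : ℝ => -u ^ 2 / 2) (-y) y := by
    have := ((hasDerivAt_pow 2 y).neg).div_const 2
    exact this.congr_deriv (by norm_num; ring)
  have := h.exp.const_mul (Real.sqrt (2 * Real.pi))⁻¹
  exact this.congr_deriv (by unfold phi; ring)

lemma phi_d2 (y : ℝ) : HasDerivAt (fun y => -y * phi y) ((y ^ 2 - 1) * phi y) y := by
  have := ((hasDerivAt_id y).neg).mul (phi_d1 y)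
  exact this.congr_deriv (by simp; ring)

lemma phi1_bound {m : ℝ} (h1 : m ≤ 1) (y : ℝ) : |-y * phi y| ≤ 1200 * W m y := by
  refine le_trans ?_ (exp_dom h1 y)
  rw [abs_mul, abs_neg, abs_of_nonneg (phi_nonneg y)]
  have := abs_le_one_add_sq y
  gcongr
  · exact phi_nonneg y
  · nlinarith [sq_nonneg y]
  · exact exp_half_le y

lemma phi2_bound {m : ℝ} (h1 : m ≤ 1) (y : ℝ) : |(y ^ 2 - 1) * phi y| ≤ 1200 * W m y := by
  refine le_trans ?_ (exp_dom h1 y)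
  rw [abs_mul, abs_of_nonneg (phi_nonneg y)]
  gcongr
  · exact phi_nonneg y
  · rw [abs_le]; constructor <;> nlinarith [sq_nonneg y, sq_nonneg (y^2)]
  · exact exp_half_le y

/-- generic space expansion -/
lemma space_gen {f f' f'' f''' : ℝ → ℝ} (hf : ∀ t, HasDerivAt f (f' t) t)
    (hf' : ∀ t, HasDerivAt f' (f'' t) t) (hf'' : ∀ t, HasDerivAt f'' (f''' t) t)
    {m K : ℝ} (hK : 0 ≤ K) (h0 : 0 ≤ m) (h1 : m ≤ 1) (b2 : ∀ y, |f'' y| ≤ K * W m y)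
    (b3 : ∀ y, |f''' y| ≤ K * W m y) (y h : ℝ) :
    (|h| ≤ 1 → |f (y + h) - f y - f' y * h - f'' y / 2 * h ^ 2| ≤ 3 * K * W m y * |h| ^ 3) ∧
    |f (y + h) - f y - f' y * h - f'' y / 2 * h ^ 2| ≤ 2 * K * h ^ 2 := by
  have b2' : ∀ y, |f'' y| ≤ K := fun y => (b2 y).trans (by nlinarith [W_le_one h0 y])
  constructor
  · intro hh
    have := W_pos m y
    apply taylor3 hf hf' hf'' y h _ (by positivity)
    intro t ht
    refine (b3 _).trans ?_
    have hth : |t * h| ≤ 1 := by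
      rw [abs_mul, abs_of_nonneg ht.1]; exact mul_le_one₀ ht.2 (abs_nonneg _) hh
    nlinarith [W_harnack h0 h1 y (t * h) hth]
  · have h2 := taylor2 hf hf' y h K hK (fun t _ => b2' _)
    have h3 : |f'' y / 2 * h ^ 2| ≤ K * h ^ 2 := by
      rw [abs_mul, abs_of_nonneg (sq_nonneg h)]
      gcongr
      rw [abs_div, abs_two]; linarith [b2' y, abs_nonneg (f'' y)]
    have := abs_sub (f (y + h) - f y - f' y * h) (f'' y / 2 * h ^ 2)
    linarith

lemma r_bounds {τ r : ℝ} (h0 : 0 ≤ τ) (h1 : τ ≤ 1) (hr : 0 < r) (h : r ^ 2 * (1 + τ) = 1) :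
    1 - τ / 2 ≤ r ∧ r ≤ 1 - τ / 2 + τ ^ 2 ∧ r ≤ 1 := by
  refine ⟨?_, ?_, ?_⟩
  · by_contra hc
    push Not at hc
    have : r ^ 2 < (1 - τ / 2) ^ 2 := by gcongr
    nlinarith [mul_nonneg (sq_nonneg τ) h0, mul_nonneg (sq_nonneg τ) (sub_nonneg.2 h1)]
  · by_contra hc
    push Not at hc
    have : (1 - τ / 2 + τ ^ 2) ^ 2 < r ^ 2 := by
      have : 0 ≤ 1 - τ / 2 + τ ^ 2 := by nlinarith [sq_nonneg τ]
      gcongr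
    have e : (1 - τ / 2 + τ ^ 2) ^ 2 * (1 + τ) = 1 + 5/4 * τ^2 + 5/4 * τ^3 + τ ^ 5 := by ring
    have : (1 - τ / 2 + τ ^ 2) ^ 2 * (1 + τ) < r ^ 2 * (1 + τ) := by gcongr
    have : 0 ≤ 5/4 * τ^2 + 5/4 * τ^3 + τ ^ 5 := by positivity
    linarith
  · by_contra hc
    push Not at hc
    nlinarith

lemma time_phi {m : ℝ} (hm1 : m ≤ 1) {τ r : ℝ} (h0 : 0 ≤ τ) (h1 : τ ≤ 1) (hr : 0 < r)
    (h : r ^ 2 * (1 + τ) = 1) (y : ℝ) :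
    |stdNormalCDF (y * r) - stdNormalCDF y - (-y * phi y) / 2 * τ| ≤ 2400 * W m y * τ ^ 2 := by
  obtain ⟨a1, a2, a3⟩ := r_bounds h0 h1 hr h
  have hr2 : 1 / 2 ≤ r ^ 2 := by nlinarith [sq_nonneg r]
  have ht := taylor2 cdf_deriv phi_d1 y (y * (r - 1)) (|y| * Real.exp (-y ^ 2 / 4))
    (by positivity) (by
      intro t ht
      have e : y + t * (y * (r - 1)) = y * (1 - t * (1 - r)) := by ring
      rw [e]
      set c := 1 - t * (1 - r) with hc
      have c1 : r ≤ c := by nlinarith [ht.1, ht.2]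
      have c2 : c ≤ 1 := by nlinarith [ht.1, ht.2]
      have c0 : 0 ≤ c := hr.le.trans c1
      have c3 : 1 / 2 ≤ c ^ 2 := hr2.trans (by gcongr)
      rw [abs_mul, abs_neg, abs_mul, abs_of_nonneg c0, abs_of_nonneg (phi_nonneg _)]
      apply mul_le_mul
      · nlinarith [abs_nonneg y]
      · refine (phi_le_exp _).trans (Real.exp_le_exp.2 ?_)
        rw [mul_pow]; nlinarith [sq_nonneg y]
      · exact phi_nonneg _
      · exact abs_nonneg _)
  have e0 : y + y * (r - 1) = y * r := by ring
  rw [e0] at ht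
  have hd := exp_dom hm1 y
  have hy := abs_le_one_add_sq y
  have hex := Real.exp_pos (-y ^ 2 / 4)
  have t1 : |y| * Real.exp (-y ^ 2 / 4) * (y * (r - 1)) ^ 2 ≤ 1200 * W m y * τ ^ 2 := by
    have : (r - 1) ^ 2 ≤ τ ^ 2 := by nlinarith
    calc |y| * Real.exp (-y ^ 2 / 4) * (y * (r - 1)) ^ 2
        = (|y| * y ^ 2 * Real.exp (-y ^ 2 / 4)) * (r - 1) ^ 2 := by ring
      _ ≤ ((1 + y ^ 2) ^ 2 * Real.exp (-y ^ 2 / 4)) * τ ^ 2 := by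
        gcongr
        nlinarith [sq_nonneg y]
      _ ≤ _ := by gcongr
  have t2 : |phi y * y * (r - 1 + τ / 2)| ≤ 1200 * W m y * τ ^ 2 := by
    rw [abs_mul]
    have : |phi y * y| ≤ 1200 * W m y := by
      have := phi1_bound hm1 y
      rwa [neg_mul, abs_neg, mul_comm] at this
    have h3 : |r - 1 + τ / 2| ≤ τ ^ 2 := by rw [abs_le]; constructor <;> nlinarith [sq_nonneg τ]
    have := W_pos m y
    gcongr
  have e : stdNormalCDF (y * r) - stdNormalCDF y - (-y * phi y) / 2 * τ
      = (stdNormalCDF (y * r) - stdNormalCDF y - phi y * (y * (r - 1)))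
        + phi y * y * (r - 1 + τ / 2) := by ring
  rw [e]
  refine (abs_add_le _ _).trans ?_
  linarith

lemma rpow_neg_upper {α q : ℝ} (h0 : 0 ≤ α) (h1 : α ≤ 1) (hq : 0 ≤ q) :
    (1 + q) ^ (-α) ≤ 1 - α * q + α * q ^ 2 := by
  have hp : (0:ℝ) < 1 + q := by linarith
  have hb := rpow_one_add_le_one_add_mul_self (s := q) (by linarith) (p := 1 - α) (by linarith) (by linarith)
  have e : (1 + q) ^ (-α) = (1 + q) ^ (1 - α) / (1 + q) := by
    rw [← Real.rpow_sub_one hp.ne']; congr 1; ring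
  rw [e, div_le_iff₀ hp]
  have : 0 ≤ α * q ^ 3 := by positivity
  nlinarith

lemma scale_ineq {p b lam τ : ℝ} (hp : 1 < p) (hb : b * (2 * p - 2) ≤ p) (hl : 1 ≤ lam)
    (hτ : lam ^ (-b) * lam ^ (-b) ≤ τ) : τ ≤ (τ * lam) ^ p := by
  have hl0 : 0 < lam := by linarith
  have hτ0 : 0 < τ := lt_of_lt_of_le (by positivity) hτ
  have e : (τ * lam) ^ p = τ * (τ ^ (p - 1) * lam ^ p) := by
    rw [Real.mul_rpow hτ0.le hl0.le, ← mul_assoc]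
    congr 1
    rw [← Real.rpow_one_add' hτ0.le (by linarith)]; congr 1; ring
  rw [e]
  have h1 : lam ^ (-(b * (2 * p - 2))) ≤ τ ^ (p - 1) := by
    calc lam ^ (-(b * (2 * p - 2))) = (lam ^ (-b) * lam ^ (-b)) ^ (p - 1) := by
          rw [← Real.rpow_add hl0, ← Real.rpow_mul hl0.le]; congr 1; ring
      _ ≤ _ := by
        apply Real.rpow_le_rpow (by positivity) hτ (by linarith)
  have h2 : 1 ≤ lam ^ (-(b * (2 * p - 2))) * lam ^ p := by
    rw [← Real.rpow_add hl0]; exact Real.one_le_rpow hl (by linarith)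
  have h3 : 1 ≤ τ ^ (p - 1) * lam ^ p := h2.trans (by gcongr)
  nlinarith

end MBE

namespace MBE

/-- the Lyapunov test function -/
noncomputable def F (κ b m s lam : ℝ) : ℝ :=
  stdNormalCDF (s / Real.sqrt lam) - κ * lam ^ (-b) * W m (s / Real.sqrt lam)

noncomputable def Fa (κ b m s lam : ℝ) : ℝ :=
  (phi (s / Real.sqrt lam) - κ * lam ^ (-b) * W1 m (s / Real.sqrt lam)) / Real.sqrt lam

noncomputable def Fg (κ b m s lam : ℝ) : ℝ :=
  (-(s / Real.sqrt lam) * phi (s / Real.sqrt lam) - κ * lam ^ (-b) * W2 m (s / Real.sqrt lam)) / 2 / lam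
    + 7200 * lam ^ (-b) * W m (s / Real.sqrt lam) / lam

lemma neg_mul_bound {c R M : ℝ} (h0 : 0 ≤ c) (h1 : c ≤ 1) (hR : -M ≤ R) (hM : 0 ≤ M) :
    -(c * R) ≤ M := by nlinarith

lemma prod_bound {β m τ q' : ℝ} (hβ0 : 0 ≤ β) (hβ1 : β ≤ 1) (hm0 : 0 ≤ m) (hm1 : m ≤ 1)
    (hτ0 : 0 ≤ τ) (hτ1 : τ ≤ 1) (hq'0 : 0 ≤ q') (hq'τ : q' ≤ τ) :
    (1 + τ) ^ (-β) * (1 + q') ^ (-m) ≤ 1 - β * τ - m * q' + 4 * τ ^ 2 := by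
  have u1 := rpow_neg_upper (α := β) (q := τ) hβ0 hβ1 hτ0
  have u2 := rpow_neg_upper (α := m) (q := q') hm0 hm1 hq'0
  have n1 : 0 ≤ (1 + q') ^ (-m) := by positivity
  have n2 : 0 ≤ 1 - β * τ + β * τ ^ 2 := by
    have : β * τ ≤ 1 := mul_le_one₀ hβ1 hτ0 hτ1
    have : 0 ≤ β * τ ^ 2 := by positivity
    linarith
  calc _ ≤ (1 - β * τ + β * τ ^ 2) * (1 - m * q' + m * q' ^ 2) := mul_le_mul u1 u2 n1 n2
    _ = 1 - β * τ - m * q' + (m * q' ^ 2 + (β * τ ^ 2) + (β * τ) * (m * q')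
        - (β * τ) * (m * q' ^ 2) - β * τ ^ 2 * (m * q') + β * τ ^ 2 * (m * q' ^ 2)) := by ring
    _ ≤ _ := by
      have k1 : m * q' ^ 2 ≤ τ ^ 2 := by
        calc m * q' ^ 2 ≤ 1 * τ ^ 2 := by gcongr
          _ = _ := one_mul _
      have k2 : β * τ ^ 2 ≤ τ ^ 2 := by
        calc β * τ ^ 2 ≤ 1 * τ ^ 2 := by gcongr
          _ = _ := one_mul _
      have k3 : (β * τ) * (m * q') ≤ τ ^ 2 := by
        calc (β * τ) * (m * q') ≤ (1 * τ) * (1 * τ) := by gcongr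
          _ = _ := by ring
      have k4 : 0 ≤ (β * τ) * (m * q' ^ 2) := by positivity
      have k5 : 0 ≤ β * τ ^ 2 * (m * q') := by positivity
      have k6 : β * τ ^ 2 * (m * q' ^ 2) ≤ τ ^ 2 := by
        calc β * τ ^ 2 * (m * q' ^ 2) ≤ 1 * τ ^ 2 * (1 * 1 ^ 2) := by
              gcongr; exact hq'τ.trans hτ1
          _ = _ := by ring
      linarith

lemma space_step {κ b m p s lam X : ℝ} (hp : 1 < p) (hm0 : 0 ≤ m) (hm1 : m ≤ 1) (hb0 : 0 ≤ b)
    (hb : b * (2 * p - 2) ≤ p) (hl : 1 ≤ lam) (hκ : 0 ≤ κ) (hκl : κ * lam ^ (-b) ≤ 1) :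
    F κ b m (s + X) lam ≤ F κ b m s lam + Fa κ b m s lam * X + Fg κ b m s lam * X ^ 2
      + 4800 * (X ^ 2) ^ p := by
  have hl0 : 0 < lam := by linarith
  set y := s / Real.sqrt lam with hy
  set h := X / Real.sqrt lam with hh
  set ρ := lam ^ (-b) with hρ
  have hρ0 : 0 < ρ := by positivity
  have hρ1 : ρ ≤ 1 := Real.rpow_le_one_of_one_le_of_nonpos hl (by linarith)
  have hsq : 0 < Real.sqrt lam := Real.sqrt_pos.2 hl0
  have hsum : (s + X) / Real.sqrt lam = y + h := by rw [hy, hh]; ring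
  have hh2 : h ^ 2 = X ^ 2 / lam := by rw [hh, div_pow, Real.sq_sqrt hl0.le]
  have hh2' : h ^ 2 * lam = X ^ 2 := by rw [hh2]; field_simp
  have g1 := space_gen cdf_deriv phi_d1 phi_d2 (m := m) (K := 1200) (by norm_num) hm0 hm1
    (phi1_bound hm1) (phi2_bound hm1) y h
  have g2 := space_gen (W_d1 m) (W_d2 m) (W_d3 m) (m := m) (K := 1200) (by norm_num) hm0 hm1
    (fun y => (W2_bound hm0 hm1 y).trans (by nlinarith [W_pos m y]))
    (fun y => (W3_bound hm0 hm1 y).trans (by nlinarith [W_pos m y])) y h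
  have eF1 : F κ b m (s + X) lam = stdNormalCDF (y + h) - κ * ρ * W m (y + h) := by
    unfold F; rw [hsum]
  have eF0 : F κ b m s lam = stdNormalCDF y - κ * ρ * W m y := rfl
  have ea : Fa κ b m s lam * X = phi y * h - κ * ρ * (W1 m y * h) := by
    unfold Fa; rw [← hy, ← hρ, hh]; ring
  have eg : Fg κ b m s lam * X ^ 2 = (-y * phi y) / 2 * h ^ 2 - κ * ρ * (W2 m y / 2 * h ^ 2)
      + 7200 * ρ * W m y * h ^ 2 := by
    unfold Fg; rw [← hy, ← hρ, hh2]; ring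
  rw [eF1, eF0, ea, eg]
  have hw := W_pos m y
  have hXp : 0 ≤ (X ^ 2) ^ p := by positivity
  have hκρ : 0 ≤ κ * ρ := by positivity
  by_cases hc : |h| ≤ ρ
  · have r1 := (abs_le.1 (g1.1 (hc.trans hρ1))).2
    have r2 := (abs_le.1 (g2.1 (hc.trans hρ1))).1
    have h3 : |h| ^ 3 ≤ ρ * h ^ 2 := by
      rw [pow_succ, sq_abs, mul_comm]; gcongr
    have h4 : W m y * |h| ^ 3 ≤ ρ * W m y * h ^ 2 := by
      calc _ ≤ W m y * (ρ * h ^ 2) := by gcongr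
        _ = _ := by ring
    have h5 : 0 ≤ W m y * |h| ^ 3 := by positivity
    have r2' : -(κ * ρ * (W m (y + h) - W m y - W1 m y * h - W2 m y / 2 * h ^ 2))
        ≤ 3600 * (W m y * |h| ^ 3) :=
      neg_mul_bound hκρ hκl (by linarith) (by positivity)
    have r1' : stdNormalCDF (y + h) - stdNormalCDF y - phi y * h - -y * phi y / 2 * h ^ 2
        ≤ 3600 * (W m y * |h| ^ 3) := by linarith
    have e : 3600 * (W m y * |h| ^ 3) + 3600 * (W m y * |h| ^ 3) ≤ 7200 * ρ * W m y * h ^ 2 := by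
      linarith
    linarith
  · push Not at hc
    have hτ : h ^ 2 ≤ (X ^ 2) ^ p := by
      rw [← hh2']
      apply scale_ineq hp hb hl
      rw [← sq_abs, pow_two]
      exact mul_le_mul hc.le hc.le hρ0.le (abs_nonneg _)
    have r1 := (abs_le.1 g1.2).2
    have r2 := (abs_le.1 g2.2).1
    have r2' : -(κ * ρ * (W m (y + h) - W m y - W1 m y * h - W2 m y / 2 * h ^ 2))
        ≤ 2400 * h ^ 2 :=
      neg_mul_bound hκρ hκl (by linarith) (by positivity)
    have : 0 ≤ 7200 * ρ * W m y * h ^ 2 := by positivity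
    linarith

lemma Fg_half_bound {κ b m s lam : ℝ} (hm0 : 0 ≤ m) (hm1 : m ≤ 1) (hb0 : 0 ≤ b)
    (hl : 1 ≤ lam) (hκ : 0 ≤ κ) (hκl : κ * lam ^ (-b) ≤ 1) :
    |Fg κ b m s lam * lam| ≤ 8000 := by
  have hl0 : 0 < lam := by linarith
  set y := s / Real.sqrt lam with hy
  set ρ := lam ^ (-b) with hρ
  have hρ0 : 0 < ρ := by positivity
  have hρ1 : ρ ≤ 1 := Real.rpow_le_one_of_one_le_of_nonpos hl (by linarith)
  have e : Fg κ b m s lam * lam = (-y * phi y) / 2 - κ * ρ * W2 m y / 2 + 7200 * ρ * W m y := by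
    unfold Fg; rw [← hy, ← hρ]; field_simp
  rw [e]
  have hw := W_pos m y
  have hw1 := W_le_one hm0 y
  have hκρ : 0 ≤ κ * ρ := by positivity
  have a1 := abs_le.1 (phi1_bound hm1 y)
  have a2 : |κ * ρ * W2 m y| ≤ 10 := by
    rw [abs_mul, abs_of_nonneg hκρ]
    have := W2_bound hm0 hm1 y
    nlinarith [abs_nonneg (W2 m y)]
  have a2 := abs_le.1 a2
  have a3 : 0 ≤ ρ * W m y := by positivity
  have a4 : ρ * W m y ≤ 1 := mul_le_one₀ hρ1 hw.le hw1
  rw [abs_le]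
  constructor <;> nlinarith

lemma Fa_bound {κ b m s lam : ℝ} (hm0 : 0 ≤ m) (hm1 : m ≤ 1)
    (hl : 1 ≤ lam) (hκ : 0 ≤ κ) (hκl : κ * lam ^ (-b) ≤ 1) :
    |Fa κ b m s lam| ≤ 3 := by
  have hl0 : 0 < lam := by linarith
  unfold Fa
  set y := s / Real.sqrt lam with hy
  set ρ := lam ^ (-b) with hρ
  have hρ0 : 0 < ρ := by positivity
  have hsq : 1 ≤ Real.sqrt lam := Real.one_le_sqrt.2 hl
  have hκρ : 0 ≤ κ * ρ := by positivity
  have a1 : |phi y| ≤ 1 := by rw [abs_of_nonneg (phi_nonneg y)]; exact phi_le_one y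
  have a3 : |W1 m y| ≤ 2 := by
    unfold W1
    have e := W_succ m y
    have p1 := W_pos (m + 1) y
    have hy := abs_le_one_add_sq y
    have h1 := W_le_one hm0 y
    rw [show -2 * m * y * W (m + 1) y = -(2 * m) * (y * W (m + 1) y) by ring, abs_mul, abs_mul,
      abs_neg, abs_of_nonneg (by linarith : (0:ℝ) ≤ 2 * m), abs_of_pos p1]
    have : |y| * W (m + 1) y ≤ 1 := by nlinarith
    have : 0 ≤ |y| * W (m + 1) y := by positivity
    nlinarith
  have a2 : |κ * ρ * W1 m y| ≤ 2 := by
    rw [abs_mul, abs_of_nonneg hκρ]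
    nlinarith [abs_nonneg (W1 m y)]
  rw [abs_div, abs_of_pos (by linarith : 0 < Real.sqrt lam), div_le_iff₀ (by linarith)]
  have := abs_sub (phi y) (κ * ρ * W1 m y)
  nlinarith

set_option maxHeartbeats 1000000 in
lemma time_step {κ b m p s lam q : ℝ} (hp : 1 < p) (hm0 : 0 ≤ m) (hm1 : m ≤ 1) (hb1 : b ≤ 1)
    (hmb : m < b) (hκβ : 10000 ≤ κ * (b - m))
    (hb : b * (2 * p - 2) ≤ p) (hl : 1 ≤ lam) (hκ : 0 ≤ κ) (hκl : κ * lam ^ (-b) ≤ 1)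
    (hq : 0 ≤ q) :
    F κ b m s lam ≤ F κ b m s (lam + q) - Fg κ b m s lam * q + 20000 * q ^ p := by
  have hl0 : 0 < lam := by linarith
  have hb0 : 0 ≤ b := by linarith
  have hgb := Fg_half_bound (s := s) hm0 hm1 hb0 hl hκ hκl
  set y := s / Real.sqrt lam with hy
  set τ := q / lam with hτ
  set ρ := lam ^ (-b) with hρ
  have hρ0 : 0 < ρ := by positivity
  have hρ1 : ρ ≤ 1 := Real.rpow_le_one_of_one_le_of_nonpos hl (by linarith)
  have hτ0 : 0 ≤ τ := by positivity
  have hτl : τ * lam = q := by rw [hτ]; field_simp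
  have hsq : 0 < Real.sqrt lam := Real.sqrt_pos.2 hl0
  have hlq : lam + q = lam * (1 + τ) := by rw [← hτl]; ring
  have h1τ : 0 < 1 + τ := by linarith
  set r := (Real.sqrt (1 + τ))⁻¹ with hr
  have hr0 : 0 < r := by rw [hr]; exact inv_pos.2 (Real.sqrt_pos.2 h1τ)
  have hr2 : r ^ 2 * (1 + τ) = 1 := by
    rw [hr, inv_pow, Real.sq_sqrt h1τ.le]; field_simp
  have hyr : s / Real.sqrt (lam + q) = y * r := by
    rw [hlq, Real.sqrt_mul hl0.le, hy, hr]; field_simp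
  have hw := W_pos m y
  have hκρ : 0 ≤ κ * ρ := by positivity
  have hB : 0 < 1 + y ^ 2 := by positivity
  -- the exact form of the window part
  have eV : (lam + q) ^ (-b) * W m (y * r)
      = ρ * W m y * ((1 + τ) ^ (-(b - m)) * (1 + τ / (1 + y ^ 2)) ^ (-m)) := by
    have e1 : 1 + (y * r) ^ 2 = (1 + y ^ 2) * (1 + τ / (1 + y ^ 2)) * (1 + τ)⁻¹ := by
      have : r ^ 2 = (1 + τ)⁻¹ := by field_simp; linarith
      rw [mul_pow, this]; field_simp; ring
    have hz : 0 ≤ 1 + τ / (1 + y ^ 2) := by positivity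
    unfold W
    rw [e1, Real.mul_rpow (by positivity) (by positivity), Real.mul_rpow hB.le hz, hlq,
      Real.mul_rpow hl0.le h1τ.le, Real.inv_rpow h1τ.le, ← Real.rpow_neg h1τ.le, neg_neg,
      show -(b - m) = -b + m by ring, Real.rpow_add h1τ]
    ring
  set q' := τ / (1 + y ^ 2) with hq'
  have hq'0 : 0 ≤ q' := by positivity
  have eF1 : F κ b m s (lam + q) = stdNormalCDF (y * r)
      - κ * (ρ * W m y * ((1 + τ) ^ (-(b - m)) * (1 + q') ^ (-m))) := by
    unfold F; rw [hyr, mul_assoc, eV]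
  have eF0 : F κ b m s lam = stdNormalCDF y - κ * (ρ * W m y) := by
    unfold F; rw [← hy, ← hρ]; ring
  have eg : Fg κ b m s lam * q = (-y * phi y) / 2 * τ - κ * ρ * (W2 m y / 2 * τ)
      + 7200 * ρ * W m y * τ := by
    unfold Fg; rw [← hy, ← hρ, hτ]; ring
  have hqp : 0 ≤ q ^ p := by positivity
  have hρW : 0 < ρ * W m y := by positivity
  by_cases hc : τ ≤ ρ * ρ
  · have hτ1 : τ ≤ 1 := hc.trans (mul_le_one₀ hρ1 hρ0.le hρ1)
    have tp := (abs_le.1 (time_phi hm1 hτ0 hτ1 hr0 hr2 y)).1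
    have hq'τ : q' ≤ τ := by
      rw [hq']; exact div_le_self hτ0 (by nlinarith [sq_nonneg y])
    have hprod := prod_bound (β := b - m) (by linarith) (by linarith) hm0 hm1 hτ0 hτ1 hq'0 hq'τ
    have hW2 := W2_lower hm0 y
    have hWs := W_succ m y
    have hq'W : q' * W m y = τ * W (m + 1) y := by
      rw [← hWs, hq']; field_simp
    have hkey : κ * (ρ * W m y) - κ * (ρ * W m y * ((1 + τ) ^ (-(b - m)) * (1 + q') ^ (-m)))
        ≥ κ * ρ * (W m y * ((b - m) * τ - 4 * τ ^ 2) - W2 m y / 2 * τ) := by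
      have c1 : κ * ρ * W m y * ((1 + τ) ^ (-(b - m)) * (1 + q') ^ (-m))
          ≤ κ * ρ * W m y * (1 - (b - m) * τ - m * q' + 4 * τ ^ 2) := by
        gcongr
      have c2 : κ * ρ * (-(W2 m y / 2 * τ)) ≤ κ * ρ * (m * (q' * W m y)) := by
        apply mul_le_mul_of_nonneg_left _ hκρ
        rw [hq'W]
        have : -2 * m * W (m + 1) y * τ ≤ W2 m y * τ := by gcongr
        linarith
      have c3 : κ * ρ * W m y * (1 - (b - m) * τ - m * q' + 4 * τ ^ 2)
        = κ * (ρ * W m y) - κ * ρ * (W m y * ((b - m) * τ - 4 * τ ^ 2)) - κ * ρ * (m * (q' * W m y)) := by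
        ring
      have c4 : κ * (ρ * W m y * ((1 + τ) ^ (-(b - m)) * (1 + q') ^ (-m)))
        = κ * ρ * W m y * ((1 + τ) ^ (-(b - m)) * (1 + q') ^ (-m)) := by ring
      rw [c4]
      linarith
    -- absorb
    have hτ2 : τ ^ 2 ≤ ρ * τ := by
      rw [pow_two]; apply mul_le_mul_of_nonneg_right _ hτ0
      exact hc.trans (mul_le_of_le_one_right hρ0.le hρ1)
    have habs : 2400 * W m y * τ ^ 2 + κ * ρ * (W m y * (4 * τ ^ 2)) + 7200 * ρ * W m y * τ
        ≤ κ * ρ * (W m y * ((b - m) * τ)) := by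
      have z : 0 ≤ ρ * W m y * τ := by positivity
      have s1 : 2400 * W m y * τ ^ 2 ≤ 2400 * (ρ * W m y * τ) := by
        calc 2400 * W m y * τ ^ 2 ≤ 2400 * W m y * (ρ * τ) := by gcongr
          _ = _ := by ring
      have s2 : κ * ρ * (W m y * (4 * τ ^ 2)) ≤ 4 * (ρ * W m y * τ) := by
        calc κ * ρ * (W m y * (4 * τ ^ 2)) ≤ 1 * (W m y * (4 * (ρ * τ))) := by gcongr
          _ = _ := by ring
      have s3 : 10000 * (ρ * W m y * τ) ≤ κ * (b - m) * (ρ * W m y * τ) := by gcongr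
      linarith
    rw [eF1, eF0, eg]
    linarith
  · push Not at hc
    have hτp : τ ≤ q ^ p := by rw [← hτl]; exact scale_ineq hp hb hl hc.le
    have hV : κ * (ρ * W m y * ((1 + τ) ^ (-(b - m)) * (1 + q') ^ (-m))) ≤ κ * (ρ * W m y) := by
      apply mul_le_mul_of_nonneg_left _ hκ
      apply mul_le_of_le_one_right hρW.le
      apply mul_le_one₀
      · exact Real.rpow_le_one_of_one_le_of_nonpos (by linarith) (by linarith)
      · positivity
      · exact Real.rpow_le_one_of_one_le_of_nonpos (by linarith) (by linarith)
    have hg : Fg κ b m s lam * q ≤ 8000 * τ := by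
      have : Fg κ b m s lam * q = Fg κ b m s lam * lam * τ := by rw [← hτl]; ring
      rw [this]
      have := (abs_le.1 hgb).2
      gcongr
    have hΦ : stdNormalCDF y - stdNormalCDF (y * r) ≤ 3000 * τ := by
      by_cases h1 : τ ≤ 1
      · have tp := (abs_le.1 (time_phi hm1 hτ0 h1 hr0 hr2 y)).1
        have a1 := (abs_le.1 (phi1_bound hm1 y)).1
        have hw1 := W_le_one hm0 y
        have : W m y * τ ^ 2 ≤ τ := by
          calc W m y * τ ^ 2 ≤ 1 * (τ * 1) := by rw [pow_two]; gcongr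
            _ = τ := by ring
        have a2 : -1200 * 1 * τ ≤ -y * phi y * τ := by
          apply mul_le_mul_of_nonneg_right _ hτ0
          linarith
        linarith
      · push Not at h1
        linarith [cdf_le_one y, cdf_nonneg (y * r)]
    rw [eF1, eF0]
    linarith

lemma full_step {κ b m p s lam X q : ℝ} (hp : 1 < p) (hm0 : 0 ≤ m) (hm1 : m ≤ 1) (hb1 : b ≤ 1)
    (hmb : m < b) (hκβ : 10000 ≤ κ * (b - m))
    (hb : b * (2 * p - 2) ≤ p) (hl : 1 ≤ lam) (hκ : 0 ≤ κ) (hκl : κ * lam ^ (-b) ≤ 1)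
    (hq : 0 ≤ q) :
    F κ b m (s + X) lam ≤ F κ b m s (lam + q) + Fa κ b m s lam * X
      + Fg κ b m s lam * (X ^ 2 - q) + 20000 * ((X ^ 2) ^ p + q ^ p) := by
  have h1 := space_step (s := s) (X := X) hp hm0 hm1 (by linarith) hb hl hκ hκl
  have h2 := time_step (s := s) (q := q) hp hm0 hm1 hb1 hmb hκβ hb hl hκ hκl hq
  have : 0 ≤ (X ^ 2) ^ p := by positivity
  linarith

end MBE

namespace MBE

lemma F_meas (κ b m : ℝ) : Measurable (fun x : ℝ × ℝ => F κ b m x.1 x.2) := by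
  unfold F
  have h1 : Measurable (fun x : ℝ × ℝ => x.1 / Real.sqrt x.2) := by fun_prop
  have h2 := cdf_meas.comp h1
  have h3 := (W_meas m).comp h1
  have h4 : Measurable (fun x : ℝ × ℝ => κ * x.2 ^ (-b)) := by fun_prop
  exact h2.sub (h4.mul h3)

lemma Fa_meas (κ b m : ℝ) : Measurable (fun x : ℝ × ℝ => Fa κ b m x.1 x.2) := by
  unfold Fa W1
  have h1 : Measurable (fun x : ℝ × ℝ => x.1 / Real.sqrt x.2) := by fun_prop
  have h2 := phi_cont.measurable.comp h1
  have h3 := (W_meas (m + 1)).comp h1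
  have h4 : Measurable (fun x : ℝ × ℝ => κ * x.2 ^ (-b)) := by fun_prop
  have h5 : Measurable (fun x : ℝ × ℝ => Real.sqrt x.2) := by fun_prop
  exact (h2.sub (h4.mul ((h1.const_mul (-2 * m)).mul h3))).div h5

lemma Fg_meas (κ b m : ℝ) : Measurable (fun x : ℝ × ℝ => Fg κ b m x.1 x.2) := by
  unfold Fg W2
  have h1 : Measurable (fun x : ℝ × ℝ => x.1 / Real.sqrt x.2) := by fun_prop
  have h2 : Measurable (fun x : ℝ × ℝ => phi (x.1 / Real.sqrt x.2)) := phi_cont.measurable.comp h1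
  have h3 : Measurable (fun x : ℝ × ℝ => W (m+1) (x.1 / Real.sqrt x.2)) := (W_meas (m + 1)).comp h1
  have h6 : Measurable (fun x : ℝ × ℝ => W (m+2) (x.1 / Real.sqrt x.2)) := (W_meas (m + 2)).comp h1
  have h7 : Measurable (fun x : ℝ × ℝ => W m (x.1 / Real.sqrt x.2)) := (W_meas m).comp h1
  fun_prop

lemma F_bound {κ b m s lam : ℝ} (hm0 : 0 ≤ m)
    (hl : 1 ≤ lam) (hκ : 0 ≤ κ) (hκl : κ * lam ^ (-b) ≤ 1) : |F κ b m s lam| ≤ 2 := by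
  unfold F
  have a1 := cdf_nonneg (s / Real.sqrt lam)
  have a2 := cdf_le_one (s / Real.sqrt lam)
  have a3 := W_pos m (s / Real.sqrt lam)
  have a4 := W_le_one hm0 (s / Real.sqrt lam)
  have a5 : 0 ≤ κ * lam ^ (-b) := by positivity
  have a6 : κ * lam ^ (-b) * W m (s / Real.sqrt lam) ≤ 1 := mul_le_one₀ hκl a3.le a4
  have a7 : 0 ≤ κ * lam ^ (-b) * W m (s / Real.sqrt lam) := by positivity
  rw [abs_le]; constructor <;> linarith

lemma orth {Ω : Type*} {m mΩ : MeasurableSpace Ω} {μ : Measure Ω} [IsProbabilityMeasure μ]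
    (hm : m ≤ mΩ) {h Z : Ω → ℝ} {C : ℝ} (hh : StronglyMeasurable[m] h) (hC : ∀ ω, |h ω| ≤ C)
    (hZ : Integrable Z μ) (h0 : μ[Z | m] =ᵐ[μ] 0) :
    Integrable (fun ω => h ω * Z ω) μ ∧ ∫ ω, h ω * Z ω ∂μ = 0 := by
  have hi : Integrable (fun ω => h ω * Z ω) μ :=
    hZ.bdd_mul (c := C) (hh.mono hm).aestronglyMeasurable (ae_of_all _ hC)
  refine ⟨hi, ?_⟩
  have h1 := condExp_mul_of_stronglyMeasurable_left hh hi hZ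
  have h2 : ∫ ω, (μ[fun ω => h ω * Z ω | m]) ω ∂μ = ∫ ω, h ω * Z ω ∂μ := integral_condExp hm
  rw [← h2]
  have h3 : (μ[fun ω => h ω * Z ω | m]) =ᵐ[μ] 0 := by
    filter_upwards [h1, h0] with ω e1 e2
    have : (μ[fun ω => h ω * Z ω | m]) ω = h ω * (μ[Z | m]) ω := e1
    rw [this, e2]; simp
  rw [integral_congr_ae h3]; simp

lemma telescope {Ω : Type*} {mΩ : MeasurableSpace Ω} {μ : Measure Ω} [IsProbabilityMeasure μ]
    (ℱ : Filtration ℕ mΩ) (n : ℕ) (Y q : ℕ → Ω → ℝ) {κ b m p L Λ : ℝ}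
    (hp : 1 < p) (hm0 : 0 ≤ m) (hm1 : m ≤ 1) (hb1 : b ≤ 1)
    (hmb : m < b) (hκβ : 10000 ≤ κ * (b - m))
    (hb : b * (2 * p - 2) ≤ p) (hL : 1 ≤ L) (hκ : 0 ≤ κ) (hκl : κ * L ^ (-b) ≤ 1)
    (hY : ∀ i < n, StronglyMeasurable[ℱ (i + 1)] (Y i))
    (hq : ∀ i < n, StronglyMeasurable[ℱ i] (q i))
    (hq0 : ∀ i < n, ∀ ω, 0 ≤ q i ω)
    (hYi : ∀ i < n, Integrable (Y i) μ)
    (hY2 : ∀ i < n, Integrable (fun ω => Y i ω ^ 2) μ)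
    (hYp : ∀ i < n, Integrable (fun ω => (Y i ω ^ 2) ^ p) μ)
    (hqp : ∀ i < n, Integrable (fun ω => (q i ω) ^ p) μ)
    (hYc : ∀ i < n, μ[Y i | ℱ i] =ᵐ[μ] 0)
    (hYq : ∀ i < n, μ[fun ω => Y i ω ^ 2 | ℱ i] =ᵐ[μ] q i)
    (hΛ : ∀ ω, ∑ i ∈ range n, q i ω ≤ Λ - L) (z : ℝ) :
    ∫ ω, F κ b m (z + ∑ i ∈ range n, Y i ω) (Λ - ∑ i ∈ range n, q i ω) ∂μ
      ≤ F κ b m z Λ + 20000 * ∑ i ∈ range n, ((∫ ω, (Y i ω ^ 2) ^ p ∂μ) + ∫ ω, (q i ω) ^ p ∂μ) := by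
  have hQ : ∀ k ≤ n, ∀ ω, L ≤ Λ - ∑ i ∈ range k, q i ω := by
    intro k hk ω
    have : ∑ i ∈ range k, q i ω ≤ ∑ i ∈ range n, q i ω :=
      sum_le_sum_of_subset_of_nonneg (range_mono hk)
        (fun i hi _ => hq0 i (mem_range.1 hi) ω)
    linarith [hΛ ω]
  have hκ' : ∀ lam, L ≤ lam → κ * lam ^ (-b) ≤ 1 := by
    intro lam hlam
    refine le_trans ?_ hκl
    apply mul_le_mul_of_nonneg_left _ hκ
    exact Real.rpow_le_rpow_of_nonpos (by linarith) hlam (by linarith)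
  have hSm : ∀ k ≤ n, Measurable[ℱ k] (fun ω => ∑ i ∈ range k, Y i ω) := by
    intro k hk
    refine Finset.measurable_fun_sum _ (fun i hi => ?_)
    have hi' := mem_range.1 hi
    exact ((hY i (by omega)).mono (ℱ.mono (by omega))).measurable
  have hQm : ∀ k < n, Measurable[ℱ k] (fun ω => ∑ i ∈ range (k + 1), q i ω) := by
    intro k hk
    refine Finset.measurable_fun_sum _ (fun i hi => ?_)
    have hi' := mem_range.1 hi
    exact ((hq i (by omega)).mono (ℱ.mono (by omega))).measurable
  have hFint : ∀ k ≤ n, Integrable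
      (fun ω => F κ b m (z + ∑ i ∈ range k, Y i ω) (Λ - ∑ i ∈ range k, q i ω)) μ := by
    intro k hk
    refine Integrable.of_bound (C := 2) ?_ (ae_of_all _ fun ω => ?_)
    · have h1 : Measurable (fun ω => ∑ i ∈ range k, Y i ω) := (hSm k hk).mono (ℱ.le k) le_rfl
      have h2 : Measurable (fun ω => ∑ i ∈ range k, q i ω) := by
        refine Finset.measurable_fun_sum _ (fun i hi => ?_)
        have hi' := mem_range.1 hi
        exact ((hq i (by omega)).mono (ℱ.le i)).measurable
      exact ((F_meas κ b m).comp ((h1.const_add z).prodMk (h2.const_sub Λ))).aestronglyMeasurable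
    · have := hQ k hk ω
      exact F_bound hm0 (by linarith) hκ (hκ' _ this)
  have main : ∀ k ≤ n, ∫ ω, F κ b m (z + ∑ i ∈ range k, Y i ω) (Λ - ∑ i ∈ range k, q i ω) ∂μ
      ≤ F κ b m z Λ + 20000 * ∑ i ∈ range k, ((∫ ω, (Y i ω ^ 2) ^ p ∂μ) + ∫ ω, (q i ω) ^ p ∂μ) := by
    intro k
    induction k with
    | zero => intro _; simp
    | succ k ih =>
      intro hk
      have hkn : k < n := by omega
      have ih := ih (by omega)
      set s : Ω → ℝ := fun ω => z + ∑ i ∈ range k, Y i ω with hs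
      set l : Ω → ℝ := fun ω => Λ - ∑ i ∈ range (k + 1), q i ω with hl
      have hpair : Measurable[ℱ k] (fun ω => (s ω, l ω)) :=
        ((hSm k hkn.le).const_add z).prodMk ((hQm k hkn).const_sub Λ)
      have hlL : ∀ ω, L ≤ l ω := fun ω => hQ (k + 1) hk ω
      have hqi : Integrable (q k) μ := integrable_condExp.congr (hYq k hkn)
      have hd : μ[fun ω => Y k ω ^ 2 - q k ω | ℱ k] =ᵐ[μ] 0 := by
        have h1 := condExp_sub (hY2 k hkn) hqi (ℱ k)
        have h2 : μ[q k | ℱ k] = q k := condExp_of_stronglyMeasurable (ℱ.le k) (hq k hkn) hqi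
        filter_upwards [h1, hYq k hkn] with ω e1 e2
        have e1' : (μ[fun ω => Y k ω ^ 2 - q k ω | ℱ k]) ω
          = (μ[fun ω => Y k ω ^ 2 | ℱ k]) ω - (μ[q k | ℱ k]) ω := e1
        rw [e1', h2, e2]; simp
      have o1 := orth (ℱ.le k) (h := fun ω => Fa κ b m (s ω) (l ω)) (C := 3)
        ((Fa_meas κ b m).comp hpair).stronglyMeasurable
        (fun ω => Fa_bound hm0 hm1 (by linarith [hlL ω]) hκ (hκ' _ (hlL ω))) (hYi k hkn) (hYc k hkn)
      have o2 := orth (ℱ.le k) (h := fun ω => Fg κ b m (s ω) (l ω)) (C := 8000)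
        ((Fg_meas κ b m).comp hpair).stronglyMeasurable
        (fun ω => by
          have hl1 : 1 ≤ l ω := by linarith [hlL ω]
          have := Fg_half_bound (s := s ω) hm0 hm1 (by linarith) hl1 hκ (hκ' _ (hlL ω))
          rw [abs_mul, abs_of_pos (by linarith : 0 < l ω)] at this
          nlinarith [abs_nonneg (Fg κ b m (s ω) (l ω))]) ((hY2 k hkn).sub hqi) hd
      have hstep : ∀ ω, F κ b m (z + ∑ i ∈ range (k + 1), Y i ω) (Λ - ∑ i ∈ range (k + 1), q i ω)
          ≤ F κ b m (z + ∑ i ∈ range k, Y i ω) (Λ - ∑ i ∈ range k, q i ω)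
            + Fa κ b m (s ω) (l ω) * Y k ω + Fg κ b m (s ω) (l ω) * (Y k ω ^ 2 - q k ω)
            + 20000 * ((Y k ω ^ 2) ^ p + q k ω ^ p) := by
        intro ω
        have := full_step (s := s ω) (lam := l ω) (X := Y k ω) (q := q k ω) hp hm0 hm1 hb1 hmb hκβ hb
          (by linarith [hlL ω]) hκ (hκ' _ (hlL ω)) (hq0 k hkn ω)
        have e1 : z + ∑ i ∈ range (k + 1), Y i ω = s ω + Y k ω := by
          rw [hs, sum_range_succ]; ring
        have e2 : Λ - ∑ i ∈ range k, q i ω = l ω + q k ω := by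
          rw [hl]; simp only [sum_range_succ]; ring
        rw [e1, e2]; exact this
      have hi1 := hFint k hkn.le
      have hi4 : Integrable (fun ω => 20000 * ((Y k ω ^ 2) ^ p + q k ω ^ p)) μ :=
        ((hYp k hkn).add (hqp k hkn)).const_mul _
      have hmono := integral_mono (hFint (k + 1) hk) (((hi1.add o1.1).add o2.1).add hi4) hstep
      set f1 : Ω → ℝ := fun ω => F κ b m (z + ∑ i ∈ range k, Y i ω) (Λ - ∑ i ∈ range k, q i ω) with hf1
      set f2 : Ω → ℝ := fun ω => Fa κ b m (s ω) (l ω) * Y k ω with hf2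
      set f3 : Ω → ℝ := fun ω => Fg κ b m (s ω) (l ω) * (Y k ω ^ 2 - q k ω) with hf3
      set f4 : Ω → ℝ := fun ω => 20000 * ((Y k ω ^ 2) ^ p + q k ω ^ p) with hf4
      have e : ∫ ω, (f1 + f2 + f3 + f4) ω ∂μ
          = ∫ ω, f1 ω ∂μ
            + 20000 * ((∫ ω, (Y k ω ^ 2) ^ p ∂μ) + ∫ ω, (q k ω) ^ p ∂μ) := by
        have g2 : ∫ ω, f2 ω ∂μ = 0 := o1.2
        have g3 : ∫ ω, f3 ω ∂μ = 0 := o2.2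
        have g3i : Integrable f3 μ := o2.1
        have g4 : ∫ ω, f4 ω ∂μ
            = 20000 * ((∫ ω, (Y k ω ^ 2) ^ p ∂μ) + ∫ ω, (q k ω) ^ p ∂μ) := by
          rw [hf4, integral_const_mul, integral_add (hYp k hkn) (hqp k hkn)]
        rw [integral_add' ((hi1.add o1.1).add g3i) hi4, integral_add' (hi1.add o1.1) g3i,
          integral_add' hi1 o1.1, g2, g3, g4]
        ring
      have hmono2 : ∫ ω, F κ b m (z + ∑ i ∈ range (k + 1), Y i ω)
          (Λ - ∑ i ∈ range (k + 1), q i ω) ∂μ ≤ ∫ ω, (f1 + f2 + f3 + f4) ω ∂μ := hmono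
      replace hmono := hmono2
      rw [e] at hmono
      rw [sum_range_succ]
      linarith
  exact main n le_rfl

end MBE

namespace MBE

lemma cdf_lip (a b : ℝ) (h : a ≤ b) : stdNormalCDF b - stdNormalCDF a ≤ b - a := by
  have := taylor1 cdf_deriv a (b - a) 1 (by norm_num)
    (by intro t; intros; rw [abs_of_nonneg (phi_nonneg _)]; exact phi_le_one _)
  rw [show a + (b - a) = b by ring, abs_of_nonneg (by linarith : 0 ≤ b - a)] at this
  linarith [le_abs_self (stdNormalCDF b - stdNormalCDF a)]

lemma y_phi (y : ℝ) : y * phi y ≤ 1 := by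
  have h1 := phi_le_exp y
  have h2 : y ≤ Real.exp (y ^ 2 / 2) := by
    have := Real.add_one_le_exp (y ^ 2 / 2)
    nlinarith [sq_nonneg (y - 1)]
  have h3 : Real.exp (-y ^ 2 / 2) * Real.exp (y ^ 2 / 2) = 1 := by
    rw [← Real.exp_add, show -y ^ 2 / 2 + y ^ 2 / 2 = 0 by ring, Real.exp_zero]
  rcases le_total y 0 with h | h
  · nlinarith [phi_nonneg y]
  · calc y * phi y ≤ Real.exp (y ^ 2 / 2) * Real.exp (-y ^ 2 / 2) := by
          gcongr
          exact phi_nonneg y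
      _ = 1 := by rw [mul_comm]; exact h3

lemma phi_anti {a b : ℝ} (h0 : 0 ≤ a) (h : a ≤ b) : phi b ≤ phi a := by
  unfold phi
  gcongr

lemma cdf_scale_pos {y r : ℝ} (hy : 0 ≤ y) (hr : 1 ≤ r) :
    stdNormalCDF (y * r) - stdNormalCDF y ≤ r - 1 := by
  have hyr : y ≤ y * r := by nlinarith
  rw [cdf_sub]
  have : ∫ u in y..(y * r), phi u ≤ ∫ u in y..(y * r), phi y := by
    apply intervalIntegral.integral_mono_on hyr (phi_cont.intervalIntegrable _ _) (by simp)
    intro u hu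
    exact phi_anti hy hu.1
  rw [intervalIntegral.integral_const] at this
  have h2 := y_phi y
  simp only [smul_eq_mul] at this
  nlinarith

lemma cdf_scale (y : ℝ) {r : ℝ} (hr : 1 ≤ r) :
    |stdNormalCDF (y * r) - stdNormalCDF y| ≤ r - 1 := by
  rcases le_total 0 y with h | h
  · have h1 := cdf_scale_pos h hr
    have h2 : stdNormalCDF y ≤ stdNormalCDF (y * r) := cdf_mono (by nlinarith)
    rw [abs_le]; constructor <;> linarith
  · have h1 := cdf_scale_pos (y := -y) (by linarith) hr
    have h2 : stdNormalCDF (y * r) ≤ stdNormalCDF y := cdf_mono (by nlinarith)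
    rw [show -y * r = -(y * r) by ring, cdf_neg, cdf_neg] at h1
    rw [abs_le]; constructor <;> linarith

lemma cdf_tail {y : ℝ} (hy : 0 ≤ y) : 1 - stdNormalCDF y ≤ 4800 * ((1 + y ^ 2) ^ 2)⁻¹ := by
  rw [← cdf_neg, cdf_eq]
  have hgi : Integrable (fun u : ℝ => Real.exp (-(1 / 4) * u ^ 2)) :=
    integrable_exp_neg_mul_sq (by norm_num)
  have hg : ∫ u : ℝ, Real.exp (-(1 / 4) * u ^ 2) ≤ 4 := by
    rw [integral_gaussian]
    rw [Real.sqrt_le_left (by norm_num)]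
    have := Real.pi_le_four
    linarith
  have h1 : ∫ u in Set.Iic (-y), phi u
      ≤ ∫ u in Set.Iic (-y), (1200 * ((1 + y ^ 2) ^ 2)⁻¹) * Real.exp (-(1 / 4) * u ^ 2) := by
    apply setIntegral_mono_on phi_integrable.integrableOn (hgi.const_mul _).integrableOn
      measurableSet_Iic
    intro u hu
    have hu' : u ≤ -y := hu
    have e1 := exp_dom (m := 0) (by norm_num) u
    have hW : W 0 u = 1 := by simp [W]
    rw [hW, mul_one] at e1
    have e2 := phi_le_exp u
    have e3 : Real.exp (-u ^ 2 / 2) = Real.exp (-u ^ 2 / 4) * Real.exp (-(1 / 4) * u ^ 2) := by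
      rw [← Real.exp_add]; congr 1; ring
    have hyu : y ^ 2 ≤ u ^ 2 := by nlinarith
    have e4 : (1 + y ^ 2) ^ 2 * Real.exp (-u ^ 2 / 4) ≤ 1200 := by
      refine le_trans ?_ e1
      gcongr
    have e5 : Real.exp (-u ^ 2 / 4) ≤ 1200 * ((1 + y ^ 2) ^ 2)⁻¹ := by
      rw [← div_eq_mul_inv, le_div_iff₀ (by positivity)]; linarith
    calc phi u ≤ _ := e2
      _ = _ := e3
      _ ≤ _ := by gcongr
  have h2 : ∫ u in Set.Iic (-y), (1200 * ((1 + y ^ 2) ^ 2)⁻¹) * Real.exp (-(1 / 4) * u ^ 2)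
      ≤ ∫ u, (1200 * ((1 + y ^ 2) ^ 2)⁻¹) * Real.exp (-(1 / 4) * u ^ 2) :=
    setIntegral_le_integral (hgi.const_mul _) (ae_of_all _ fun u => by positivity)
  have h4 : ∫ u, (1200 * ((1 + y ^ 2) ^ 2)⁻¹) * Real.exp (-(1 / 4) * u ^ 2)
      = (1200 * ((1 + y ^ 2) ^ 2)⁻¹) * ∫ u : ℝ, Real.exp (-(1 / 4) * u ^ 2) := integral_const_mul _ _
  have h3 : (1200 * ((1 + y ^ 2) ^ 2)⁻¹) * ∫ u : ℝ, Real.exp (-(1 / 4) * u ^ 2)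
      ≤ (1200 * ((1 + y ^ 2) ^ 2)⁻¹) * 4 := by gcongr
  linarith

lemma cdf_tail_W {m K y : ℝ} (hm : m ≤ 1) (hK : 0 < K) (hy : K ≤ y) :
    1 - stdNormalCDF y ≤ 4800 / K ^ 2 * W m y := by
  refine (cdf_tail (by linarith)).trans ?_
  have h1 : W 1 y ≤ W m y := W_antitone hm y
  rw [W_one] at h1
  have h2 : (1 + y ^ 2)⁻¹ ≤ (K ^ 2)⁻¹ := by
    apply inv_anti₀ (by positivity); nlinarith
  calc 4800 * ((1 + y ^ 2) ^ 2)⁻¹ = 4800 * ((1 + y ^ 2)⁻¹ * (1 + y ^ 2)⁻¹) := by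
        rw [sq, mul_inv]
    _ ≤ 4800 * ((K ^ 2)⁻¹ * W m y) := by gcongr
    _ = _ := by rw [div_eq_mul_inv]; ring

lemma window {Ω : Type*} {mΩ : MeasurableSpace Ω} {μ : Measure Ω} [IsProbabilityMeasure μ]
    {T : Ω → ℝ} (hT : Measurable T) {m D : ℝ} (hm : 1 / 2 < m)
    (hD : ∀ z r : ℝ, 0 < r → μ.real {ω | |T ω - z| < r} ≤ 2 * D + 2 * r)
    (z : ℝ) {δ : ℝ} (hδ : 0 < δ) :
    ∫ ω, W m ((z - T ω) / δ) ∂μ ≤ 2 * D + 2 / (1 - 1 / (2 * m)) * δ := by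
  have hm0 : 0 < m := by linarith
  have hmeas : Measurable (fun ω => W m ((z - T ω) / δ)) :=
    (W_meas m).comp ((hT.const_sub z).div_const δ)
  have hInteg : Integrable (fun ω => W m ((z - T ω) / δ)) μ := by
    refine Integrable.of_bound (C := 1) hmeas.aestronglyMeasurable (ae_of_all _ fun ω => ?_)
    rw [Real.norm_eq_abs, abs_of_pos (W_pos _ _)]
    exact W_le_one hm0.le _
  rw [hInteg.integral_eq_integral_Ioc_meas_le (M := 1) (ae_of_all _ fun ω => (W_pos _ _).le)
    (ae_of_all _ fun ω => W_le_one hm0.le _)]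
  have hα : 1 / (2 * m) < 1 := by rw [div_lt_one (by positivity)]; linarith
  have hii : IntervalIntegrable (fun t : ℝ => t ^ (-(1 / (2 * m)))) volume 0 1 :=
    intervalIntegral.intervalIntegrable_rpow' (by linarith)
  have hii2 : IntervalIntegrable (fun t : ℝ => 2 * D + 2 * (δ * t ^ (-(1 / (2 * m))))) volume 0 1 :=
    (intervalIntegrable_const).add ((hii.const_mul δ).const_mul 2)
  have hval : ∫ t in (0:ℝ)..1, (2 * D + 2 * (δ * t ^ (-(1 / (2 * m)))))
      = 2 * D + 2 / (1 - 1 / (2 * m)) * δ := by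
    rw [intervalIntegral.integral_add intervalIntegrable_const ((hii.const_mul δ).const_mul 2),
      intervalIntegral.integral_const_mul 2, intervalIntegral.integral_const_mul 2,
      intervalIntegral.integral_const_mul δ,
      integral_rpow (Or.inl (by linarith)), intervalIntegral.integral_const]
    have : -(1 / (2 * m)) + 1 ≠ 0 := by linarith
    rw [Real.zero_rpow this, Real.one_rpow, show -(1 / (2 * m)) + 1 = 1 - 1 / (2 * m) by ring]
    simp only [smul_eq_mul]
    ring
  rw [← hval, intervalIntegral.integral_of_le zero_le_one]
  apply integral_mono_of_nonneg
  · exact ae_of_all _ fun t => measureReal_nonneg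
  · exact (intervalIntegrable_iff_integrableOn_Ioc_of_le zero_le_one).1 hii2
  · refine (ae_restrict_iff' measurableSet_Ioc).2 (ae_of_all _ fun t ht => ?_)
    have ht0 : 0 < t := ht.1
    have hr : 0 < δ * t ^ (-(1 / (2 * m))) := by positivity
    refine le_trans (measureReal_mono ?_) (hD z _ hr)
    intro ω hω
    have hω' : t ≤ W m ((z - T ω) / δ) := hω
    set y := (z - T ω) / δ with hy
    have hTy : T ω - z = - (δ * y) := by rw [hy]; field_simp; ring
    show |T ω - z| < _
    rw [hTy, abs_neg, abs_mul, abs_of_pos hδ]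
    apply mul_lt_mul_of_pos_left _ hδ
    have h1 : (1 + y ^ 2) ≤ t ^ (-(1 / m)) := by
      have e : (W m y) ^ (-(1 / m)) = 1 + y ^ 2 := by
        unfold W
        rw [← Real.rpow_mul (by positivity), show -m * -(1 / m) = 1 by field_simp, Real.rpow_one]
      rw [← e]
      apply Real.rpow_le_rpow_of_nonpos ht0 hω'
      have : 0 < 1 / m := by positivity
      linarith
    have h2 : (t ^ (-(1 / (2 * m)))) ^ 2 = t ^ (-(1 / m)) := by
      rw [← Real.rpow_natCast, ← Real.rpow_mul ht0.le]; congr 1; push_cast; field_simp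
    apply abs_lt_of_sq_lt_sq _ (by positivity)
    rw [h2]; linarith

end MBE

namespace MBE
set_option linter.unusedSectionVars false

lemma condExp_bdd_mul {Ω : Type*} {m mΩ : MeasurableSpace Ω} {μ : Measure Ω} [IsProbabilityMeasure μ]
    (hm : m ≤ mΩ) {h Z g : Ω → ℝ} {C : ℝ} (hh : StronglyMeasurable[m] h) (hC : ∀ ω, |h ω| ≤ C)
    (hZ : Integrable Z μ) (h0 : μ[Z | m] =ᵐ[μ] g) :
    Integrable (fun ω => h ω * Z ω) μ ∧ μ[fun ω => h ω * Z ω | m] =ᵐ[μ] fun ω => h ω * g ω := by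
  have hi : Integrable (fun ω => h ω * Z ω) μ :=
    hZ.bdd_mul (c := C) (hh.mono hm).aestronglyMeasurable (ae_of_all _ hC)
  refine ⟨hi, ?_⟩
  have h1 := condExp_mul_of_stronglyMeasurable_left hh hi hZ
  filter_upwards [h1, h0] with ω e1 e2
  have : (μ[fun ω => h ω * Z ω | m]) ω = h ω * (μ[Z | m]) ω := e1
  rw [this, e2]

structure Setup {Ω : Type*} {mΩ : MeasurableSpace Ω} (μ : Measure Ω) (ℱ : Filtration ℕ mΩ)
    (n : ℕ) (X c : ℕ → Ω → ℝ) (p ε : ℝ) : Prop where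
  hp : 1 < p
  hε : 0 < ε
  hε1 : ε ≤ 1
  meas : ∀ i < n, StronglyMeasurable[ℱ (i + 1)] (X i)
  int : ∀ i < n, Integrable (X i) μ
  zero : ∀ i < n, μ[X i | ℱ i] =ᵐ[μ] 0
  intp : ∀ i < n, Integrable (fun ω => (X i ω ^ 2) ^ p) μ
  cmeas : ∀ i < n, StronglyMeasurable[ℱ i] (c i)
  cnn : ∀ i < n, ∀ ω, 0 ≤ c i ω
  ceq : ∀ i < n, μ[fun ω => X i ω ^ 2 | ℱ i] =ᵐ[μ] c i
  sum : ∑ i ∈ range n, ∫ ω, (X i ω ^ 2) ^ p ∂μ ≤ ε ^ (2 * p + 1)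
  dev : μ.real {ω | ε ^ 2 < |∑ i ∈ range n, c i ω - 1|} ≤ ε

lemma le_one_add_rpow {x p : ℝ} (hx : 0 ≤ x) (hp : 1 ≤ p) : x ≤ 1 + x ^ p := by
  rcases le_total x 1 with h | h
  · have : 0 ≤ x ^ p := by positivity
    linarith
  · have := Real.rpow_le_rpow_of_exponent_le h hp
    rw [Real.rpow_one] at this; linarith

noncomputable def ind {Ω : Type*} (c : ℕ → Ω → ℝ) (ε : ℝ) (i : ℕ) (ω : Ω) : ℝ :=
  if ∑ j ∈ range (i + 1), c j ω ≤ 1 + ε ^ 2 then 1 else 0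

noncomputable def TT {Ω : Type*} (n : ℕ) (X c : ℕ → Ω → ℝ) (ε : ℝ) (ω : Ω) : ℝ :=
  ∑ i ∈ range n, ind c ε i ω * X i ω

noncomputable def RR {Ω : Type*} (n : ℕ) (c : ℕ → Ω → ℝ) (ε : ℝ) (ω : Ω) : ℝ :=
  ∑ i ∈ range n, ind c ε i ω * c i ω

section
variable {Ω : Type*} {mΩ : MeasurableSpace Ω} {μ : Measure Ω} {ℱ : Filtration ℕ mΩ}
    {n : ℕ} {X c : ℕ → Ω → ℝ} {p ε : ℝ}

lemma ind_nn (i : ℕ) (ω : Ω) : 0 ≤ ind c ε i ω := by unfold ind; split_ifs <;> norm_num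
lemma ind_le (i : ℕ) (ω : Ω) : ind c ε i ω ≤ 1 := by unfold ind; split_ifs <;> norm_num
lemma ind_sq (i : ℕ) (ω : Ω) : ind c ε i ω ^ 2 = ind c ε i ω := by unfold ind; split_ifs <;> norm_num

variable [IsProbabilityMeasure μ]

lemma Setup.neg (h : Setup μ ℱ n X c p ε) : Setup μ ℱ n (fun i ω => - X i ω) c p ε where
  hp := h.hp
  hε := h.hε
  hε1 := h.hε1
  meas i hi := (h.meas i hi).neg
  int i hi := (h.int i hi).neg
  zero i hi := by
    have h1 := condExp_neg (X i) (ℱ i) (μ := μ)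
    filter_upwards [h1, h.zero i hi] with ω e1 e2
    have : (μ[fun ω => - X i ω | ℱ i]) ω = - (μ[X i | ℱ i]) ω := e1
    rw [this, e2]; simp
  intp i hi := by simpa using h.intp i hi
  cmeas := h.cmeas
  cnn := h.cnn
  ceq i hi := by simpa using h.ceq i hi
  sum := by simpa using h.sum
  dev := h.dev

lemma TT_neg (ω : Ω) : TT n (fun i ω => - X i ω) c ε ω = - TT n X c ε ω := by
  simp [TT]

lemma Setup.int2 (h : Setup μ ℱ n X c p ε) : ∀ i < n, Integrable (fun ω => X i ω ^ 2) μ := by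
  intro i hi
  refine ((integrable_const (1:ℝ)).add (h.intp i hi)).mono' ?_ (ae_of_all _ fun ω => ?_)
  · exact (((h.meas i hi).mono (ℱ.le _)).pow 2).aestronglyMeasurable
  · rw [Real.norm_eq_abs, abs_of_nonneg (sq_nonneg _)]
    exact le_one_add_rpow (sq_nonneg _) h.hp.le

lemma Setup.cint (h : Setup μ ℱ n X c p ε) : ∀ i < n, Integrable (fun ω => c i ω ^ p) μ ∧
    ∫ ω, c i ω ^ p ∂μ ≤ ∫ ω, (X i ω ^ 2) ^ p ∂μ := by
  intro i hi
  have e0 : (fun ω => ‖X i ω ^ 2‖ ^ p) = fun ω => (X i ω ^ 2) ^ p := by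
    funext ω; rw [Real.norm_eq_abs, abs_of_nonneg (sq_nonneg _)]
  have hi0 : Integrable (fun ω => ‖X i ω ^ 2‖ ^ p) μ := by rw [e0]; exact h.intp i hi
  have h1 := Integrable.norm_condExp_rpow_le (m := ℱ i) h.hp.le hi0
  have h2 := integral_norm_condExp_rpow_le (m := ℱ i) h.hp.le hi0
  have e1 : (fun ω => ‖(μ[fun ω => X i ω ^ 2 | ℱ i]) ω‖ ^ p) =ᵐ[μ] fun ω => c i ω ^ p := by
    filter_upwards [h.ceq i hi] with ω e
    rw [e, Real.norm_eq_abs, abs_of_nonneg (h.cnn i hi ω)]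
  rw [integral_congr_ae e1, e0] at h2
  refine ⟨?_, h2⟩
  have hm : AEStronglyMeasurable (fun ω => c i ω ^ p) μ := by
    have := ((h.cmeas i hi).mono (ℱ.le _)).measurable
    exact (this.pow_const p).aestronglyMeasurable
  refine (integrable_condExp (m := ℱ i) (f := fun ω => ‖X i ω ^ 2‖ ^ p) (μ := μ)).mono' hm ?_
  filter_upwards [h1, e1] with ω a1 a2
  have a2' : ‖(μ[fun ω => X i ω ^ 2 | ℱ i]) ω‖ ^ p = c i ω ^ p := a2
  rw [Real.norm_eq_abs, abs_of_nonneg (Real.rpow_nonneg (h.cnn i hi ω) p), ← a2']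
  exact a1

lemma Setup.ind_meas (h : Setup μ ℱ n X c p ε) : ∀ i < n, StronglyMeasurable[ℱ i] (ind c ε i) := by
  intro i hi
  have : Measurable[ℱ i] (fun ω => ∑ j ∈ range (i + 1), c j ω) := by
    refine Finset.measurable_fun_sum _ (fun j hj => ?_)
    have hj' := mem_range.1 hj
    exact ((h.cmeas j (by omega)).mono (ℱ.mono (by omega))).measurable
  apply Measurable.stronglyMeasurable
  unfold ind
  exact Measurable.ite (measurableSet_le this measurable_const) measurable_const measurable_const

lemma Setup.TT_meas (h : Setup μ ℱ n X c p ε) : Measurable (TT n X c ε) := by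
  unfold TT
  refine Finset.measurable_fun_sum _ (fun i hi => ?_)
  have hi' := mem_range.1 hi
  exact ((h.ind_meas i hi').mono (ℱ.le _)).measurable.mul ((h.meas i hi').mono (ℱ.le _)).measurable

lemma Setup.RR_meas (h : Setup μ ℱ n X c p ε) : Measurable (RR n c ε) := by
  unfold RR
  refine Finset.measurable_fun_sum _ (fun i hi => ?_)
  have hi' := mem_range.1 hi
  exact ((h.ind_meas i hi').mono (ℱ.le _)).measurable.mul ((h.cmeas i hi').mono (ℱ.le _)).measurable

lemma Setup.RR_le (h : Setup μ ℱ n X c p ε) (ω : Ω) : RR n c ε ω ≤ 1 + ε ^ 2 := by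
  have : ∀ k ≤ n, ∑ i ∈ range k, ind c ε i ω * c i ω ≤ 1 + ε ^ 2 ∧
      ∑ i ∈ range k, ind c ε i ω * c i ω ≤ ∑ i ∈ range k, c i ω := by
    intro k
    induction k with
    | zero => intro _; simp; positivity
    | succ k ih =>
      intro hk
      obtain ⟨i1, i2⟩ := ih (by omega)
      have hc := h.cnn k (by omega) ω
      have a : ∑ i ∈ range (k + 1), ind c ε i ω * c i ω ≤ ∑ i ∈ range (k + 1), c i ω := by
        rw [sum_range_succ, sum_range_succ]
        nlinarith [ind_le (c := c) (ε := ε) k ω]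
      refine ⟨?_, a⟩
      by_cases hcond : ∑ j ∈ range (k + 1), c j ω ≤ 1 + ε ^ 2
      · exact a.trans hcond
      · rw [sum_range_succ]
        have : ind c ε k ω = 0 := by simp [ind, hcond]
        rw [this]; linarith
  exact (this n le_rfl).1

lemma Setup.good (h : Setup μ ℱ n X c p ε) (ω : Ω) (hω : |∑ i ∈ range n, c i ω - 1| ≤ ε ^ 2) :
    TT n X c ε ω = ∑ i ∈ range n, X i ω ∧ RR n c ε ω = ∑ i ∈ range n, c i ω := by
  have : ∀ i ∈ range n, ind c ε i ω = 1 := by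
    intro i hi
    have hi' := mem_range.1 hi
    have : ∑ j ∈ range (i + 1), c j ω ≤ ∑ j ∈ range n, c j ω :=
      sum_le_sum_of_subset_of_nonneg (range_mono (by omega))
        (fun j hj _ => h.cnn j (mem_range.1 hj) ω)
    have h2 := (abs_le.1 hω).2
    unfold ind
    rw [if_pos (by linarith)]
  constructor
  · unfold TT; exact sum_congr rfl (fun i hi => by rw [this i hi, one_mul])
  · unfold RR; exact sum_congr rfl (fun i hi => by rw [this i hi, one_mul])

lemma Setup.drift (h : Setup μ ℱ n X c p ε) {κ b m L : ℝ}
    (hm0 : 0 ≤ m) (hm1 : m ≤ 1) (hb1 : b ≤ 1)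
    (hmb : m < b) (hκβ : 10000 ≤ κ * (b - m))
    (hb : b * (2 * p - 2) ≤ p) (hL : 1 ≤ L) (hκ : 0 ≤ κ) (hκl : κ * L ^ (-b) ≤ 1) (x : ℝ) :
    ∫ ω, F κ b m ((x - TT n X c ε ω) / ε) ((1 + ε ^ 2 - RR n c ε ω) / ε ^ 2 + L) ∂μ
      ≤ F κ b m (x / ε) ((1 + ε ^ 2) / ε ^ 2 + L) + 40000 * ε := by
  have hε := h.hε
  have hp := h.hp
  set Y : ℕ → Ω → ℝ := fun i ω => (- ind c ε i ω / ε) * X i ω with hY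
  set q : ℕ → Ω → ℝ := fun i ω => (ind c ε i ω / ε ^ 2) * c i ω with hq
  have hε2 : 0 < ε ^ 2 := by positivity
  have b1 : ∀ i ω, |(- ind c ε i ω / ε)| ≤ 1 / ε := by
    intro i ω
    rw [abs_div, abs_neg, abs_of_nonneg (ind_nn _ _), abs_of_pos hε]
    gcongr; exact ind_le _ _
  have b2 : ∀ i ω, |(ind c ε i ω / ε ^ 2)| ≤ 1 / ε ^ 2 := by
    intro i ω
    rw [abs_div, abs_of_nonneg (ind_nn _ _), abs_of_pos hε2]
    gcongr; exact ind_le _ _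
  have m1 : ∀ i < n, StronglyMeasurable[ℱ i] (fun ω => - ind c ε i ω / ε) := fun i hi =>
    ((h.ind_meas i hi).measurable.neg.div_const ε).stronglyMeasurable
  have m2 : ∀ i < n, StronglyMeasurable[ℱ i] (fun ω => ind c ε i ω / ε ^ 2) := fun i hi =>
    ((h.ind_meas i hi).measurable.div_const _).stronglyMeasurable
  have eY2 : ∀ i ω, Y i ω ^ 2 = (ind c ε i ω / ε ^ 2) * X i ω ^ 2 := by
    intro i ω
    simp only [hY]
    rw [mul_pow, div_pow, neg_sq, ind_sq]
  have k1 := fun i hi => condExp_bdd_mul (ℱ.le i) (m1 i hi) (b1 i) (h.int i hi) (h.zero i hi)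
  have k2 := fun i hi => condExp_bdd_mul (ℱ.le i) (m2 i hi) (b2 i) (h.int2 i hi) (h.ceq i hi)
  have eYp : ∀ i ω, (Y i ω ^ 2) ^ p = (ind c ε i ω / ε ^ (2 * p)) * (X i ω ^ 2) ^ p := by
    intro i ω
    rw [eY2, Real.mul_rpow (div_nonneg (ind_nn _ _) hε2.le) (sq_nonneg _),
      Real.div_rpow (ind_nn _ _) hε2.le, Real.rpow_mul hε.le, Real.rpow_two]
    congr 2
    unfold ind; split_ifs
    · simp
    · rw [Real.zero_rpow (by linarith)]
  have eqp : ∀ i < n, ∀ ω, (q i ω) ^ p = (ind c ε i ω / ε ^ (2 * p)) * (c i ω) ^ p := by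
    intro i hi ω
    rw [hq]
    simp only []
    rw [Real.mul_rpow (div_nonneg (ind_nn _ _) hε2.le) (h.cnn i hi ω),
      Real.div_rpow (ind_nn _ _) hε2.le, Real.rpow_mul hε.le, Real.rpow_two]
    congr 2
    unfold ind; split_ifs
    · simp
    · rw [Real.zero_rpow (by linarith)]
  have hE : 0 < ε ^ (2 * p) := by positivity
  have m3 : ∀ i < n, AEStronglyMeasurable (fun ω => ind c ε i ω / ε ^ (2 * p)) μ := fun i hi =>
    (((h.ind_meas i hi).mono (ℱ.le i)).measurable.div_const _).aestronglyMeasurable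
  have b3 : ∀ i ω, ‖(ind c ε i ω / ε ^ (2 * p))‖ ≤ 1 / ε ^ (2 * p) := by
    intro i ω
    rw [Real.norm_eq_abs, abs_div, abs_of_nonneg (ind_nn _ _), abs_of_pos hE]
    gcongr; exact ind_le _ _
  have iYp : ∀ i < n, Integrable (fun ω => (Y i ω ^ 2) ^ p) μ := by
    intro i hi
    simp only [eYp]
    exact (h.intp i hi).bdd_mul (m3 i hi) (ae_of_all _ (b3 i))
  have iqp : ∀ i < n, Integrable (fun ω => (q i ω) ^ p) μ := by
    intro i hi
    have : (fun ω => (q i ω) ^ p) = fun ω => (ind c ε i ω / ε ^ (2 * p)) * (c i ω) ^ p :=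
      funext (eqp i hi)
    rw [this]
    exact (h.cint i hi).1.bdd_mul (m3 i hi) (ae_of_all _ (b3 i))
  have vY : ∀ i < n, ∫ ω, (Y i ω ^ 2) ^ p ∂μ ≤ (1 / ε ^ (2 * p)) * ∫ ω, (X i ω ^ 2) ^ p ∂μ := by
    intro i hi
    rw [← integral_const_mul]
    apply integral_mono (iYp i hi) ((h.intp i hi).const_mul _)
    intro ω
    simp only [eYp]
    gcongr; exact ind_le _ _
  have vq : ∀ i < n, ∫ ω, (q i ω) ^ p ∂μ ≤ (1 / ε ^ (2 * p)) * ∫ ω, (X i ω ^ 2) ^ p ∂μ := by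
    intro i hi
    have : ∫ ω, (q i ω) ^ p ∂μ ≤ (1 / ε ^ (2 * p)) * ∫ ω, (c i ω) ^ p ∂μ := by
      rw [← integral_const_mul]
      apply integral_mono (iqp i hi) ((h.cint i hi).1.const_mul _)
      intro ω
      show q i ω ^ p ≤ 1 / ε ^ (2 * p) * c i ω ^ p
      rw [eqp i hi]
      have := Real.rpow_nonneg (h.cnn i hi ω) p
      gcongr; exact ind_le _ _
    refine this.trans ?_
    have := (h.cint i hi).2
    gcongr
  have sY : ∀ ω, ∑ i ∈ range n, Y i ω = - TT n X c ε ω / ε := by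
    intro ω
    simp only [hY, TT]
    rw [← sum_neg_distrib, sum_div]
    exact sum_congr rfl fun i _ => by ring
  have sq' : ∀ ω, ∑ i ∈ range n, q i ω = RR n c ε ω / ε ^ 2 := by
    intro ω
    simp only [hq, RR]
    rw [sum_div]
    exact sum_congr rfl fun i _ => by ring
  have key := telescope ℱ n Y q (L := L) (Λ := (1 + ε ^ 2) / ε ^ 2 + L) (κ := κ) (b := b) (m := m)
    hp hm0 hm1 hb1 hmb hκβ hb hL hκ hκl
    (fun i hi => ((m1 i hi).mono (ℱ.mono (Nat.le_succ i))).mul (h.meas i hi))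
    (fun i hi => (m2 i hi).mul (h.cmeas i hi))
    (fun i hi ω => mul_nonneg (div_nonneg (ind_nn _ _) hε2.le) (h.cnn i hi ω))
    (fun i hi => (k1 i hi).1)
    (fun i hi => by simp only [eY2]; exact (k2 i hi).1)
    iYp iqp
    (fun i hi => by
      refine (k1 i hi).2.trans (ae_of_all _ fun ω => ?_)
      simp)
    (fun i hi => by simp only [eY2]; exact (k2 i hi).2)
    (fun ω => by
      rw [sq']
      have : RR n c ε ω / ε ^ 2 ≤ (1 + ε ^ 2) / ε ^ 2 := by
        gcongr; exact h.RR_le ω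
      linarith) (x / ε)
  simp only [sY, sq'] at key
  have e1 : ∀ ω, x / ε + -TT n X c ε ω / ε = (x - TT n X c ε ω) / ε := fun ω => by ring
  have e2 : ∀ ω, (1 + ε ^ 2) / ε ^ 2 + L - RR n c ε ω / ε ^ 2
    = (1 + ε ^ 2 - RR n c ε ω) / ε ^ 2 + L := fun ω => by ring
  simp only [e1, e2] at key
  refine key.trans ?_
  have tot : ∑ i ∈ range n, ((∫ ω, (Y i ω ^ 2) ^ p ∂μ) + ∫ ω, (q i ω) ^ p ∂μ) ≤ 2 * ε := by
    calc _ ≤ ∑ i ∈ range n, (2 * (1 / ε ^ (2 * p))) * ∫ ω, (X i ω ^ 2) ^ p ∂μ := by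
          apply sum_le_sum
          intro i hi
          have hi' := mem_range.1 hi
          linarith [vY i hi', vq i hi']
      _ = (2 * (1 / ε ^ (2 * p))) * ∑ i ∈ range n, ∫ ω, (X i ω ^ 2) ^ p ∂μ := by rw [mul_sum]
      _ ≤ (2 * (1 / ε ^ (2 * p))) * ε ^ (2 * p + 1) := by
          have := h.sum
          gcongr
      _ = 2 * ε := by
          rw [Real.rpow_add hε, Real.rpow_one]; field_simp
  linarith

end
end MBE

namespace MBE
set_option linter.unusedSectionVars false

lemma lamW_eq {b m lam s : ℝ} (hl : 0 < lam) :
    lam ^ (-b) * W m (s / Real.sqrt lam) = lam ^ (-(b - m)) * (lam + s ^ 2) ^ (-m) := by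
  unfold W
  rw [div_pow, Real.sq_sqrt hl.le]
  have : lam + s ^ 2 = lam * (1 + s ^ 2 / lam) := by field_simp
  rw [this, Real.mul_rpow hl.le (by positivity), ← mul_assoc, ← Real.rpow_add hl]
  congr 2; ring

lemma lamW {κ b m lam L s : ℝ} (hκ : 0 ≤ κ) (hm : 0 ≤ m) (hmb : m < b) (hL : 0 < L) (hl : L ≤ lam) :
    κ * lam ^ (-b) * W m (s / Real.sqrt lam) ≤ κ * L ^ (-b) * W m (s / Real.sqrt (L + 2)) := by
  have hl0 : 0 < lam := by linarith
  rw [mul_assoc, mul_assoc]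
  apply mul_le_mul_of_nonneg_left _ hκ
  have h1 : lam ^ (-b) * W m (s / Real.sqrt lam) ≤ L ^ (-b) * W m (s / Real.sqrt L) := by
    rw [lamW_eq hl0, lamW_eq hL]
    apply mul_le_mul
    · exact Real.rpow_le_rpow_of_nonpos hL hl (by linarith)
    · exact Real.rpow_le_rpow_of_nonpos (by positivity) (by linarith) (by linarith)
    · positivity
    · positivity
  refine h1.trans ?_
  apply mul_le_mul_of_nonneg_left _ (by positivity)
  unfold W
  apply Real.rpow_le_rpow_of_nonpos (by positivity) _ (by linarith)
  rw [div_pow, div_pow, Real.sq_sqrt hL.le, Real.sq_sqrt (by linarith)]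
  gcongr; linarith

section
variable {Ω : Type*} {mΩ : MeasurableSpace Ω} {μ : Measure Ω} {ℱ : Filtration ℕ mΩ}
    {n : ℕ} {X c : ℕ → Ω → ℝ} {p ε : ℝ} [IsProbabilityMeasure μ]

lemma Setup.devset (h : Setup μ ℱ n X c p ε) :
    MeasurableSet {ω | ε ^ 2 < |∑ i ∈ range n, c i ω - 1|} := by
  apply measurableSet_lt measurable_const
  apply Measurable.abs
  apply Measurable.sub_const
  refine Finset.measurable_fun_sum _ (fun i hi => ?_)
  exact ((h.cmeas i (mem_range.1 hi)).mono (ℱ.le _)).measurable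

lemma Setup.oneside (h : Setup μ ℱ n X c p ε) {κ b m L K D : ℝ}
    (hm0 : 1 / 2 < m) (hm1 : m ≤ 1) (hb1 : b ≤ 1)
    (hmb : m < b) (hκβ : 10000 ≤ κ * (b - m))
    (hb : b * (2 * p - 2) ≤ p) (hL : 1 ≤ L) (hκ : 0 ≤ κ) (hK : 0 < K)
    (hsmall : κ * L ^ (-b) + 4800 / K ^ 2 ≤ 1 / 4)
    (hD : ∀ z r : ℝ, 0 < r → μ.real {ω | |TT n X c ε ω - z| < r} ≤ 2 * D + 2 * r) (x : ℝ) :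
    μ.real {ω | TT n X c ε ω ≤ x} ≤ stdNormalCDF x + D / 2
      + (40001 + (2 / (1 - 1 / (2 * m))) * Real.sqrt (L + 2) / 4 + K * Real.sqrt (L + 2) + (1 + L)) * ε := by
  have hε := h.hε
  have hm00 : 0 ≤ m := by linarith
  have hL0 : 0 < L := by linarith
  have hsq : 0 < Real.sqrt (L + 2) := Real.sqrt_pos.2 (by linarith)
  set δ := ε * Real.sqrt (L + 2) with hδ
  have hδ0 : 0 < δ := by positivity
  set x' := x + K * δ with hx'
  set T := TT n X c ε with hT
  set lam : Ω → ℝ := fun ω => (1 + ε ^ 2 - RR n c ε ω) / ε ^ 2 + L with hlam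
  have hTm : Measurable T := h.TT_meas
  have hRm : Measurable (RR n c ε) := h.RR_meas
  have hlL : ∀ ω, L ≤ lam ω := by
    intro ω
    have : 0 ≤ (1 + ε ^ 2 - RR n c ε ω) / ε ^ 2 := div_nonneg (by linarith [h.RR_le ω]) (by positivity)
    simp only [hlam]; linarith
  have h4 : 0 ≤ 4800 / K ^ 2 := by positivity
  have hκl : κ * L ^ (-b) ≤ 1 := by linarith
  have drift := h.drift hm00 hm1 hb1 hmb hκβ hb hL hκ hκl x'
  set Gc : Set Ω := {ω | ε ^ 2 < |∑ i ∈ range n, c i ω - 1|} with hGc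
  have hGm : MeasurableSet Gc := h.devset
  have hAm : MeasurableSet {ω | T ω ≤ x} := measurableSet_le hTm measurable_const
  have hpt : ∀ ω, ({ω | T ω ≤ x}.indicator (fun _ => (1:ℝ)) ω)
      ≤ Gc.indicator (fun _ => (1:ℝ)) ω + F κ b m ((x' - T ω) / ε) (lam ω)
        + 1 / 4 * W m ((x' - T ω) / δ) := by
    intro ω
    have hlw := lamW (s := (x' - T ω) / ε) hκ hm00 hmb hL0 (hlL ω)
    have es : (x' - T ω) / ε / Real.sqrt (L + 2) = (x' - T ω) / δ := by
      rw [hδ, div_div]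
    rw [es] at hlw
    have hWp := W_pos m ((x' - T ω) / δ)
    have hkp : 0 ≤ κ * L ^ (-b) := by positivity
    have hF : F κ b m ((x' - T ω) / ε) (lam ω) = stdNormalCDF ((x' - T ω) / ε / Real.sqrt (lam ω))
      - κ * lam ω ^ (-b) * W m ((x' - T ω) / ε / Real.sqrt (lam ω)) := rfl
    rw [hF]
    have c0 := cdf_nonneg ((x' - T ω) / ε / Real.sqrt (lam ω))
    have hkW : κ * L ^ (-b) * W m ((x' - T ω) / δ) ≤ (1 / 4 - 4800 / K ^ 2) * W m ((x' - T ω) / δ) :=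
      mul_le_mul_of_nonneg_right (by linarith) hWp.le
    have h5 : 0 ≤ 4800 / K ^ 2 * W m ((x' - T ω) / δ) := by positivity
    have i0 : 0 ≤ Gc.indicator (fun _ => (1:ℝ)) ω := Set.indicator_nonneg (fun _ _ => zero_le_one) _
    by_cases hA : T ω ≤ x
    · rw [Set.indicator_of_mem (by exact hA)]
      by_cases hG : ω ∈ Gc
      · rw [Set.indicator_of_mem hG]; linarith
      · have hG' : |∑ i ∈ range n, c i ω - 1| ≤ ε ^ 2 := by
          simpa [hGc] using hG
        obtain ⟨_, e2⟩ := h.good ω hG'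
        have hl2 : lam ω ≤ L + 2 := by
          simp only [hlam]
          rw [e2]
          have : (1 + ε ^ 2 - ∑ i ∈ range n, c i ω) / ε ^ 2 ≤ 2 := by
            rw [div_le_iff₀ (by positivity)]
            have := (abs_le.1 hG').1
            linarith
          linarith
        have hl0 : 0 < lam ω := by linarith [hlL ω]
        have hKy : K ≤ (x' - T ω) / δ := by
          rw [le_div_iff₀ hδ0]; linarith
        have hs0 : 0 ≤ (x' - T ω) / ε := by
          apply div_nonneg _ hε.le
          have : 0 < K * δ := by positivity
          linarith
        have hyy : (x' - T ω) / δ ≤ (x' - T ω) / ε / Real.sqrt (lam ω) := by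
          rw [← es]
          apply div_le_div_of_nonneg_left hs0 (Real.sqrt_pos.2 hl0) (Real.sqrt_le_sqrt hl2)
        have t1 := cdf_tail_W hm1 hK hKy
        have t2 := cdf_mono hyy
        linarith
    · rw [Set.indicator_of_notMem (by exact hA)]; linarith
  have i1 : Integrable ({ω | T ω ≤ x}.indicator (fun _ => (1:ℝ))) μ :=
    (integrable_const 1).indicator hAm
  have i2 : Integrable (Gc.indicator (fun _ => (1:ℝ))) μ := (integrable_const 1).indicator hGm
  have i3 : Integrable (fun ω => F κ b m ((x' - T ω) / ε) (lam ω)) μ := by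
    refine Integrable.of_bound (C := 2) ?_ (ae_of_all _ fun ω => ?_)
    · exact ((F_meas κ b m).comp (((hTm.const_sub x').div_const ε).prodMk
        (((hRm.const_sub _).div_const _).add_const L))).aestronglyMeasurable
    · refine F_bound hm00 (by linarith [hlL ω]) hκ (le_trans ?_ hκl)
      apply mul_le_mul_of_nonneg_left _ hκ
      exact Real.rpow_le_rpow_of_nonpos hL0 (hlL ω) (by linarith)
  have i4 : Integrable (fun ω => 1 / 4 * W m ((x' - T ω) / δ)) μ := by
    apply Integrable.const_mul
    refine Integrable.of_bound (C := 1) ((W_meas m).comp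
      ((hTm.const_sub x').div_const δ)).aestronglyMeasurable (ae_of_all _ fun ω => ?_)
    rw [Real.norm_eq_abs, abs_of_pos (W_pos _ _)]
    exact W_le_one hm00 _
  have hmono := integral_mono i1 ((i2.add i3).add i4) hpt
  have esum : ∫ ω, ((Gc.indicator (fun _ => (1:ℝ)) + fun ω => F κ b m ((x' - T ω) / ε) (lam ω))
      + fun ω => 1 / 4 * W m ((x' - T ω) / δ)) ω ∂μ = μ.real Gc
      + ∫ ω, F κ b m ((x' - T ω) / ε) (lam ω) ∂μ + 1 / 4 * ∫ ω, W m ((x' - T ω) / δ) ∂μ := by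
    rw [integral_add' (i2.add i3) i4, integral_add' i2 i3, integral_const_mul]
    congr 2
    exact integral_indicator_one hGm
  have hmono' : μ.real {ω | T ω ≤ x} ≤ μ.real Gc
      + ∫ ω, F κ b m ((x' - T ω) / ε) (lam ω) ∂μ + 1 / 4 * ∫ ω, W m ((x' - T ω) / δ) ∂μ := by
    rw [← esum, ← integral_indicator_one hAm]
    exact hmono
  have hwin := window hTm hm0 hD x' hδ0
  have hdev : μ.real Gc ≤ ε := h.dev
  -- final comparison of the starting value
  have hF0 : F κ b m (x' / ε) ((1 + ε ^ 2) / ε ^ 2 + L) ≤ stdNormalCDF x + K * δ + (1 + L) * ε := by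
    set a := ε ^ 2 * (1 + L) with ha
    have ha0 : 0 ≤ a := by positivity
    have haε : a ≤ (1 + L) * ε := by
      rw [ha]; nlinarith [h.hε1, mul_pos hε (by linarith : 0 < 1 + L)]
    have eΛ : (1 + ε ^ 2) / ε ^ 2 + L = (1 + a) / ε ^ 2 := by rw [ha]; field_simp; ring
    have hFle : F κ b m (x' / ε) ((1 + ε ^ 2) / ε ^ 2 + L)
        ≤ stdNormalCDF (x' / ε / Real.sqrt ((1 + ε ^ 2) / ε ^ 2 + L)) := by
      unfold F
      have := W_pos m (x' / ε / Real.sqrt ((1 + ε ^ 2) / ε ^ 2 + L))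
      have : 0 ≤ κ * ((1 + ε ^ 2) / ε ^ 2 + L) ^ (-b) * W m (x' / ε / Real.sqrt ((1 + ε ^ 2) / ε ^ 2 + L)) := by
        positivity
      linarith
    have er : x' / ε / Real.sqrt ((1 + ε ^ 2) / ε ^ 2 + L) = x' / Real.sqrt (1 + a) := by
      rw [eΛ, Real.sqrt_div (by positivity), Real.sqrt_sq hε.le]
      have : 0 < Real.sqrt (1 + a) := Real.sqrt_pos.2 (by linarith)
      field_simp
    rw [er] at hFle
    have hs1 : 1 ≤ Real.sqrt (1 + a) := by rw [Real.one_le_sqrt]; linarith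
    have hs2 : Real.sqrt (1 + a) ≤ 1 + a := by
      rw [Real.sqrt_le_left (by linarith)]; nlinarith
    have sc := cdf_scale (x' / Real.sqrt (1 + a)) hs1
    rw [div_mul_cancel₀ _ (by linarith)] at sc
    have sc' := (abs_le.1 sc).1
    have hlip := cdf_lip x x' (by have : 0 < K * δ := by positivity
                                  linarith)
    linarith
  have : (40001 + (2 / (1 - 1 / (2 * m))) * Real.sqrt (L + 2) / 4 + K * Real.sqrt (L + 2) + (1 + L)) * ε
    = 40001 * ε + 1 / 4 * (2 / (1 - 1 / (2 * m)) * δ) + K * δ + (1 + L) * ε := by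
    rw [hδ]; ring
  rw [this]
  linarith

lemma Setup.twoside (h : Setup μ ℱ n X c p ε) {κ b m L K D : ℝ}
    (hm0 : 1 / 2 < m) (hm1 : m ≤ 1) (hb1 : b ≤ 1)
    (hmb : m < b) (hκβ : 10000 ≤ κ * (b - m))
    (hb : b * (2 * p - 2) ≤ p) (hL : 1 ≤ L) (hκ : 0 ≤ κ) (hK : 0 < K)
    (hsmall : κ * L ^ (-b) + 4800 / K ^ 2 ≤ 1 / 4)
    (hD : ∀ z r : ℝ, 0 < r → μ.real {ω | |TT n X c ε ω - z| < r} ≤ 2 * D + 2 * r) (x : ℝ) :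
    |μ.real {ω | TT n X c ε ω ≤ x} - stdNormalCDF x| ≤ D / 2
      + (40001 + (2 / (1 - 1 / (2 * m))) * Real.sqrt (L + 2) / 4 + K * Real.sqrt (L + 2) + (1 + L)) * ε := by
  have u1 := h.oneside hm0 hm1 hb1 hmb hκβ hb hL hκ hK hsmall hD x
  have u2 := h.neg.oneside (D := D) hm0 hm1 hb1 hmb hκβ hb hL hκ hK hsmall (by
    intro z r hr
    have := hD (-z) r hr
    simp only [TT_neg]
    have e : ∀ ω, |-TT n X c ε ω - z| = |TT n X c ε ω - -z| := by
      intro ω; rw [← abs_neg]; congr 1; ring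
    simp only [e]; exact this) (-x)
  simp only [TT_neg, neg_le_neg_iff, cdf_neg] at u2
  have hu : 1 ≤ μ.real {ω | TT n X c ε ω ≤ x} + μ.real {ω | x ≤ TT n X c ε ω} := by
    rw [← probReal_univ (μ := μ)]
    refine le_trans (measureReal_mono ?_) (measureReal_union_le _ _)
    intro ω _
    exact le_total (TT n X c ε ω) x
  rw [abs_le]; constructor <;> linarith

end
end MBE

namespace MBE
set_option linter.unusedSectionVars false

lemma real_sub_le {Ω : Type*} {mΩ : MeasurableSpace Ω} {μ : Measure Ω} [IsProbabilityMeasure μ]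
    {A B G : Set Ω} (h : A ⊆ B ∪ G) : μ.real A ≤ μ.real B + μ.real G :=
  (measureReal_mono h).trans (measureReal_union_le _ _)

theorem boot (p : ℝ) (hp : 1 < p) : ∃ C : ℝ, 0 < C ∧
    ∀ (Ω : Type) (mΩ : MeasurableSpace Ω) (μ : Measure Ω) (_ : IsProbabilityMeasure μ)
      (ℱ : Filtration ℕ mΩ) (n : ℕ) (X c : ℕ → Ω → ℝ) (ε : ℝ), Setup μ ℱ n X c p ε →
      ∀ x, |μ.real {ω | ∑ i ∈ range n, X i ω ≤ x} - stdNormalCDF x| ≤ C * ε := by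
  have hp0 : 0 < p := by linarith
  set b : ℝ := (p + 1) / (2 * p) with hb
  set m : ℝ := 1 / 2 + 1 / (4 * p) with hm
  have hbm : b - m = 1 / (4 * p) := by rw [hb, hm]; field_simp; ring
  have hq : 0 < 1 / (4 * p) := by positivity
  have hq4 : 1 / (4 * p) ≤ 1 / 4 := by
    apply one_div_le_one_div_of_le <;> linarith
  have hb1 : b ≤ 1 := by linarith
  have hm0 : 1 / 2 < m := by linarith
  have hm1 : m ≤ 1 := by linarith
  have hmb : m < b := by linarith
  have hbp : b * (2 * p - 2) ≤ p := by
    have : b * (2 * p - 2) = p - 1 / p := by rw [hb]; field_simp; ring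
    have h1 : 0 < 1 / p := by positivity
    linarith
  set κ : ℝ := 10000 / (b - m) with hκd
  have hbm0 : 0 < b - m := by linarith
  have hκ : 0 < κ := by positivity
  have hκβ : 10000 ≤ κ * (b - m) := by rw [hκd]; field_simp; exact le_rfl
  have hb0 : 0 < b := by linarith
  set L : ℝ := (8 * κ + 1) ^ (1 / b) with hLd
  have hL : 1 ≤ L := Real.one_le_rpow (by linarith) (by positivity)
  have hLb : L ^ (-b) = (8 * κ + 1)⁻¹ := by
    rw [hLd, ← Real.rpow_mul (by positivity), show 1 / b * -b = -1 by field_simp,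
      Real.rpow_neg_one]
  have hsmall : κ * L ^ (-b) + 4800 / (200:ℝ) ^ 2 ≤ 1 / 4 := by
    have : κ * (8 * κ + 1)⁻¹ ≤ 1 / 8 := by
      rw [← div_eq_mul_inv, div_le_iff₀ (by positivity)]; linarith
    rw [hLb]; norm_num at this ⊢; linarith
  set C : ℝ := 40001 + (2 / (1 - 1 / (2 * m))) * Real.sqrt (L + 2) / 4 + 200 * Real.sqrt (L + 2) + (1 + L)
    with hC
  have hC0 : 0 < C := by
    have : 0 < 1 - 1 / (2 * m) := by
      have : 1 / (2 * m) < 1 := by rw [div_lt_one (by linarith)]; linarith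
      linarith
    have : 0 ≤ (2 / (1 - 1 / (2 * m))) * Real.sqrt (L + 2) / 4 := by positivity
    have : 0 ≤ 200 * Real.sqrt (L + 2) := by positivity
    linarith
  refine ⟨2 * C + 1, by linarith, ?_⟩
  intro Ω mΩ μ hμ ℱ n X c ε h x
  have hε := h.hε
  set D : ℝ := ⨆ y, |μ.real {ω | TT n X c ε ω ≤ y} - stdNormalCDF y| with hD
  have hbd : BddAbove (Set.range fun y => |μ.real {ω | TT n X c ε ω ≤ y} - stdNormalCDF y|) := by
    refine ⟨1, ?_⟩
    rintro _ ⟨y, rfl⟩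
    have a1 : μ.real {ω | TT n X c ε ω ≤ y} ≤ 1 := measureReal_le_one
    have a2 : 0 ≤ μ.real {ω | TT n X c ε ω ≤ y} := measureReal_nonneg
    have a3 := cdf_nonneg y
    have a4 := cdf_le_one y
    show |μ.real {ω | TT n X c ε ω ≤ y} - stdNormalCDF y| ≤ 1
    rw [abs_le]; constructor <;> linarith
  have hle : ∀ y, |μ.real {ω | TT n X c ε ω ≤ y} - stdNormalCDF y| ≤ D := fun y => le_ciSup hbd y
  have hwin : ∀ z r : ℝ, 0 < r → μ.real {ω | |TT n X c ε ω - z| < r} ≤ 2 * D + 2 * r := by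
    intro z r hr
    have hTm := h.TT_meas
    have s1 : μ.real {ω | |TT n X c ε ω - z| < r}
        ≤ μ.real ({ω | TT n X c ε ω ≤ z + r} \ {ω | TT n X c ε ω ≤ z - r}) := by
      refine measureReal_mono ?_ (measure_ne_top _ _)
      intro ω hω
      have hω' := abs_lt.1 (show |TT n X c ε ω - z| < r from hω)
      refine ⟨?_, ?_⟩
      · show TT n X c ε ω ≤ z + r
        linarith
      · show ¬ (TT n X c ε ω ≤ z - r)
        linarith
    rw [measureReal_sdiff (by intro ω hω; exact le_trans (show TT n X c ε ω ≤ z - r from hω) (by linarith))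
      (measurableSet_le hTm measurable_const)] at s1
    have e1 := (abs_le.1 (hle (z + r))).2
    have e2 := (abs_le.1 (hle (z - r))).1
    have e3 := cdf_lip (z - r) (z + r) (by linarith)
    linarith
  have hD2 : D ≤ D / 2 + C * ε := by
    apply ciSup_le
    intro y
    exact h.twoside hm0 hm1 hb1 hmb hκβ hbp hL hκ.le (by norm_num) hsmall hwin y
  have hx := abs_le.1 (hle x)
  have hdev := h.dev
  have t1 : μ.real {ω | ∑ i ∈ range n, X i ω ≤ x} ≤ μ.real {ω | TT n X c ε ω ≤ x}
      + μ.real {ω | ε ^ 2 < |∑ i ∈ range n, c i ω - 1|} := by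
    apply real_sub_le
    intro ω hω
    by_cases hG : |∑ i ∈ range n, c i ω - 1| ≤ ε ^ 2
    · left
      show TT n X c ε ω ≤ x
      rw [(h.good ω hG).1]; exact hω
    · right; exact not_le.1 hG
  have t2 : μ.real {ω | TT n X c ε ω ≤ x} ≤ μ.real {ω | ∑ i ∈ range n, X i ω ≤ x}
      + μ.real {ω | ε ^ 2 < |∑ i ∈ range n, c i ω - 1|} := by
    apply real_sub_le
    intro ω hω
    by_cases hG : |∑ i ∈ range n, c i ω - 1| ≤ ε ^ 2
    · left
      show ∑ i ∈ range n, X i ω ≤ x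
      rw [← (h.good ω hG).1]; exact hω
    · right; exact not_le.1 hG
  rw [abs_le]; constructor <;> linarith

end MBE

namespace MBE
set_option linter.unusedSectionVars false

lemma exp_quad {u : ℝ} (h : |u| ≤ 1) : Real.exp u ≤ 1 + u + u ^ 2 := by
  have := Real.abs_exp_sub_one_sub_id_le h
  have := (abs_le.1 this).2
  linarith

section
variable {Ω : Type*} {mΩ : MeasurableSpace Ω} {μ : Measure Ω} {ℱ : Filtration ℕ mΩ}
    {n : ℕ} [IsProbabilityMeasure μ]

lemma exp_super {u d v : ℕ → Ω → ℝ}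
    (hu : ∀ i < n, StronglyMeasurable[ℱ (i + 1)] (u i)) (hu1 : ∀ i < n, ∀ ω, |u i ω| ≤ 1)
    (hd : ∀ i < n, StronglyMeasurable[ℱ i] (d i)) (hd1 : ∀ i < n, ∀ ω, |d i ω| ≤ 1)
    (hv : ∀ i < n, StronglyMeasurable[ℱ i] (v i)) (hv0 : ∀ i < n, ∀ ω, 0 ≤ v i ω)
    (hud : ∀ i < n, μ[u i | ℱ i] =ᵐ[μ] d i)
    (huv : ∀ i < n, μ[fun ω => u i ω ^ 2 | ℱ i] =ᵐ[μ] v i) :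
    ∀ k ≤ n, Measurable[ℱ k] (fun ω => Real.exp (∑ i ∈ range k, (u i ω - d i ω - v i ω))) ∧
      (∀ ω, Real.exp (∑ i ∈ range k, (u i ω - d i ω - v i ω)) ≤ Real.exp (2 * k)) ∧
      ∫ ω, Real.exp (∑ i ∈ range k, (u i ω - d i ω - v i ω)) ∂μ ≤ 1 := by
  intro k
  induction k with
  | zero => intro _; refine ⟨?_, ?_, ?_⟩ <;> simp
  | succ k ih =>
    intro hk
    have hkn : k < n := by omega
    obtain ⟨i1, i2, i3⟩ := ih hkn.le
    have hmeas : Measurable[ℱ (k + 1)]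
        (fun ω => Real.exp (∑ i ∈ range (k + 1), (u i ω - d i ω - v i ω))) := by
      apply Real.measurable_exp.comp
      refine Finset.measurable_fun_sum _ (fun i hi => ?_)
      have hi' := mem_range.1 hi
      have a1 := ((hu i (by omega)).mono (ℱ.mono (by omega : i + 1 ≤ k + 1))).measurable
      have a2 := ((hd i (by omega)).mono (ℱ.mono (by omega : i ≤ k + 1))).measurable
      have a3 := ((hv i (by omega)).mono (ℱ.mono (by omega : i ≤ k + 1))).measurable
      exact (a1.sub a2).sub a3
    have hbd : ∀ ω, Real.exp (∑ i ∈ range (k + 1), (u i ω - d i ω - v i ω)) ≤ Real.exp (2 * (k + 1 : ℕ)) := by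
      intro ω
      apply Real.exp_le_exp.2
      have : ∀ i ∈ range (k + 1), (u i ω - d i ω - v i ω) ≤ 2 := by
        intro i hi
        have hi' := mem_range.1 hi
        have a1 := (abs_le.1 (hu1 i (by omega) ω)).2
        have a2 := (abs_le.1 (hd1 i (by omega) ω)).1
        have a3 := hv0 i (by omega) ω
        linarith
      have := sum_le_sum this
      rw [sum_const, card_range, nsmul_eq_mul] at this
      linarith
    refine ⟨hmeas, hbd, ?_⟩
    set Z : Ω → ℝ := fun ω => Real.exp (∑ i ∈ range k, (u i ω - d i ω - v i ω)) with hZ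
    set H : Ω → ℝ := fun ω => Z ω * Real.exp (- d k ω - v k ω) with hH
    have hHm : StronglyMeasurable[ℱ k] H := by
      apply Measurable.stronglyMeasurable
      exact i1.mul (Real.measurable_exp.comp ((hd k hkn).measurable.neg.sub (hv k hkn).measurable))
    have hH0 : ∀ ω, 0 ≤ H ω := fun ω => by simp only [hH, hZ]; positivity
    have hHb : ∀ ω, |H ω| ≤ Real.exp (2 * k) * Real.exp 1 := by
      intro ω
      rw [abs_of_nonneg (hH0 ω)]
      apply mul_le_mul (i2 ω) _ (Real.exp_pos _).le (Real.exp_pos _).le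
      apply Real.exp_le_exp.2
      have a2 := (abs_le.1 (hd1 k hkn ω)).1
      have a3 := hv0 k hkn ω
      linarith
    have uint : Integrable (u k) μ :=
      Integrable.of_bound (C := 1) ((hu k hkn).mono (ℱ.le _)).aestronglyMeasurable (ae_of_all _ (hu1 k hkn))
    have u2int : Integrable (fun ω => u k ω ^ 2) μ := by
      refine Integrable.of_bound (C := 1) (((hu k hkn).mono (ℱ.le _)).pow 2).aestronglyMeasurable
        (ae_of_all _ fun ω => ?_)
      rw [Real.norm_eq_abs, abs_pow]
      exact pow_le_one₀ (abs_nonneg _) (hu1 k hkn ω)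
    obtain ⟨k1, k1'⟩ := condExp_bdd_mul (ℱ.le k) hHm hHb uint (hud k hkn)
    obtain ⟨k2, k2'⟩ := condExp_bdd_mul (ℱ.le k) hHm hHb u2int (huv k hkn)
    have q1 : ∫ ω, H ω * u k ω ∂μ = ∫ ω, H ω * d k ω ∂μ := by
      rw [← integral_condExp (ℱ.le k), integral_congr_ae k1']
    have q2 : ∫ ω, H ω * u k ω ^ 2 ∂μ = ∫ ω, H ω * v k ω ∂μ := by
      rw [← integral_condExp (ℱ.le k), integral_congr_ae k2']
    have n1 : Integrable (fun ω => H ω * d k ω) μ := integrable_condExp.congr k1'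
    have n2 : Integrable (fun ω => H ω * v k ω) μ := integrable_condExp.congr k2'
    have n0 : Integrable H μ :=
      Integrable.of_bound (C := Real.exp (2 * k) * Real.exp 1)
        (hHm.mono (ℱ.le _)).aestronglyMeasurable (ae_of_all _ hHb)
    have nZ : Integrable Z μ :=
      Integrable.of_bound (C := Real.exp (2 * k)) (i1.mono (ℱ.le k) le_rfl).aestronglyMeasurable
        (ae_of_all _ fun ω => by
          rw [Real.norm_eq_abs, abs_of_pos (by simp only [hZ]; positivity)]; exact i2 ω)
    have nN : Integrable (fun ω => Real.exp (∑ i ∈ range (k + 1), (u i ω - d i ω - v i ω))) μ :=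
      Integrable.of_bound (C := Real.exp (2 * (k + 1 : ℕ)))
        (hmeas.mono (ℱ.le (k + 1)) le_rfl).aestronglyMeasurable
        (ae_of_all _ fun ω => by
          rw [Real.norm_eq_abs, abs_of_pos (Real.exp_pos _)]; exact hbd ω)
    have step1 : ∫ ω, Real.exp (∑ i ∈ range (k + 1), (u i ω - d i ω - v i ω)) ∂μ
        ≤ ∫ ω, (H + (fun ω => H ω * u k ω) + (fun ω => H ω * u k ω ^ 2)) ω ∂μ := by
      apply integral_mono nN ((n0.add k1).add k2)
      intro ω
      have e : Real.exp (∑ i ∈ range (k + 1), (u i ω - d i ω - v i ω)) = H ω * Real.exp (u k ω) := by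
        simp only [hH, hZ]
        rw [← Real.exp_add, ← Real.exp_add, sum_range_succ]; congr 1; ring
      show Real.exp (∑ i ∈ range (k + 1), (u i ω - d i ω - v i ω)) ≤ H ω + H ω * u k ω + H ω * u k ω ^ 2
      rw [e]
      have := mul_le_mul_of_nonneg_left (exp_quad (hu1 k hkn ω)) (hH0 ω)
      linarith
    have step2 : ∫ ω, (H + (fun ω => H ω * d k ω) + (fun ω => H ω * v k ω)) ω ∂μ ≤ ∫ ω, Z ω ∂μ := by
      apply integral_mono ((n0.add n1).add n2) nZ
      intro ω
      show H ω + H ω * d k ω + H ω * v k ω ≤ Z ω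
      have e : Z ω = H ω * Real.exp (d k ω + v k ω) := by
        simp only [hH]
        rw [mul_assoc, ← Real.exp_add]; simp
      rw [e]
      have := mul_le_mul_of_nonneg_left (Real.add_one_le_exp (d k ω + v k ω)) (hH0 ω)
      linarith
    rw [integral_add' (n0.add k1) k2, integral_add' n0 k1, q1, q2] at step1
    rw [integral_add' (n0.add n1) n2, integral_add' n0 n1] at step2
    linarith

lemma exp_tail {u d v : ℕ → Ω → ℝ}
    (hu : ∀ i < n, StronglyMeasurable[ℱ (i + 1)] (u i)) (hu1 : ∀ i < n, ∀ ω, |u i ω| ≤ 1)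
    (hd : ∀ i < n, StronglyMeasurable[ℱ i] (d i)) (hd1 : ∀ i < n, ∀ ω, |d i ω| ≤ 1)
    (hv : ∀ i < n, StronglyMeasurable[ℱ i] (v i)) (hv0 : ∀ i < n, ∀ ω, 0 ≤ v i ω)
    (hud : ∀ i < n, μ[u i | ℱ i] =ᵐ[μ] d i)
    (huv : ∀ i < n, μ[fun ω => u i ω ^ 2 | ℱ i] =ᵐ[μ] v i) (a : ℝ) :
    μ.real {ω | a ≤ ∑ i ∈ range n, (u i ω - d i ω - v i ω)} ≤ Real.exp (-a) := by
  obtain ⟨h1, h2, h3⟩ := exp_super hu hu1 hd hd1 hv hv0 hud huv n le_rfl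
  have hInteg : Integrable (fun ω => Real.exp (∑ i ∈ range n, (u i ω - d i ω - v i ω))) μ :=
    Integrable.of_bound (C := Real.exp (2 * n)) (h1.mono (ℱ.le n) le_rfl).aestronglyMeasurable
      (ae_of_all _ fun ω => by
        rw [Real.norm_eq_abs, abs_of_pos (Real.exp_pos _)]; exact h2 ω)
  have := mul_meas_ge_le_integral_of_nonneg (ae_of_all _ fun ω => (Real.exp_pos _).le) hInteg (Real.exp a)
  simp only [Real.exp_le_exp] at this
  have h4 : Real.exp a * μ.real {ω | a ≤ ∑ i ∈ range n, (u i ω - d i ω - v i ω)} ≤ 1 := this.trans h3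
  rw [Real.exp_neg, ← one_div, le_div_iff₀ (Real.exp_pos a), mul_comm]
  exact h4

end
end MBE

namespace MBE
set_option linter.unusedSectionVars false

noncomputable def xi (ε x : ℝ) : ℝ := if x ≤ ε ^ 2 then x else 0

lemma xi_nn {ε x : ℝ} (hx : 0 ≤ x) : 0 ≤ xi ε x := by unfold xi; split_ifs <;> linarith
lemma xi_le {ε x : ℝ} (hx : 0 ≤ x) : xi ε x ≤ x := by unfold xi; split_ifs <;> linarith
lemma xi_le2 {ε x : ℝ} : xi ε x ≤ ε ^ 2 := by
  unfold xi; split_ifs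
  · assumption
  · positivity
lemma xi_meas (ε : ℝ) : Measurable (xi ε) := by
  unfold xi
  exact Measurable.ite (measurableSet_le measurable_id measurable_const) measurable_id measurable_const

lemma xi_low {ε x p : ℝ} (hε : 0 < ε) (hp : 1 < p) (hx : 0 ≤ x) :
    x - ε ^ (2 - 2 * p) * x ^ p ≤ xi ε x := by
  unfold xi
  have h0 : 0 ≤ ε ^ (2 - 2 * p) * x ^ p := by positivity
  split_ifs with h
  · linarith
  · push Not at h
    have hx0 : 0 < x := lt_of_le_of_lt (by positivity) h
    have e : x = x ^ (1 - p) * x ^ p := by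
      rw [← Real.rpow_add hx0]; simp
    have e2 : x ^ (1 - p) ≤ ε ^ (2 - 2 * p) := by
      have : ε ^ (2 - 2 * p) = (ε ^ 2) ^ (1 - p) := by
        rw [← Real.rpow_two, ← Real.rpow_mul hε.le]; congr 1; ring
      rw [this]
      exact Real.rpow_le_rpow_of_nonpos (by positivity) h.le (by linarith)
    have e3 : x ^ (1 - p) * x ^ p ≤ ε ^ (2 - 2 * p) * x ^ p := by gcongr
    linarith

lemma xi_sq {ε x p : ℝ} (hε : 0 < ε) (hε1 : ε ≤ 1) (hp : 1 < p) (hx : 0 ≤ x) :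
    xi ε x ^ 2 ≤ ε ^ (2 + 1 / p) * x + ε ^ (3 - 2 * p) * x ^ p := by
  have h0 : 0 ≤ ε ^ (3 - 2 * p) * x ^ p := by positivity
  have h1 : 0 ≤ ε ^ (2 + 1 / p) * x := by positivity
  unfold xi
  split_ifs with h
  · by_cases h2 : x ≤ ε ^ (2 + 1 / p)
    · have : x ^ 2 ≤ ε ^ (2 + 1 / p) * x := by rw [sq]; gcongr
      linarith
    · push Not at h2
      have hx0 : 0 < x := lt_of_le_of_lt (by positivity) h2
      have e : x ^ 2 = x ^ (2 - p) * x ^ p := by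
        rw [← Real.rpow_add hx0]; simp
      have key : x ^ (2 - p) ≤ ε ^ (3 - 2 * p) := by
        rcases le_total p 2 with hp2 | hp2
        · calc x ^ (2 - p) ≤ (ε ^ 2) ^ (2 - p) := Real.rpow_le_rpow hx h (by linarith)
            _ = ε ^ (4 - 2 * p) := by
              rw [← Real.rpow_two, ← Real.rpow_mul hε.le]; congr 1; ring
            _ ≤ ε ^ (3 - 2 * p) := Real.rpow_le_rpow_of_exponent_ge hε hε1 (by linarith)
        · calc x ^ (2 - p) ≤ (ε ^ (2 + 1 / p)) ^ (2 - p) :=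
                Real.rpow_le_rpow_of_nonpos (by positivity) h2.le (by linarith)
            _ = ε ^ ((2 + 1 / p) * (2 - p)) := by rw [← Real.rpow_mul hε.le]
            _ ≤ ε ^ (3 - 2 * p) := by
              apply Real.rpow_le_rpow_of_exponent_ge hε hε1
              have : (2 + 1 / p) * (2 - p) = 3 - 2 * p + 2 / p := by field_simp; ring
              have h3 : 0 < 2 / p := by positivity
              linarith
      have : x ^ (2 - p) * x ^ p ≤ ε ^ (3 - 2 * p) * x ^ p := by gcongr
      linarith
  · rw [zero_pow (by norm_num)]; linarith

lemma exp_small (p : ℝ) (hp : 1 < p) : ∃ C : ℝ, 0 < C ∧ ∀ ε : ℝ, 0 < ε → ε ≤ 1 →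
    Real.exp (-(ε ^ (-(1 / (2 * p))) / 4)) ≤ C * ε := by
  set k := ⌈2 * p⌉₊ with hk
  refine ⟨4 ^ k * k.factorial, by positivity, ?_⟩
  intro ε hε hε1
  set u := ε ^ (-(1 / (2 * p))) with hu
  have hu1 : 1 ≤ u := Real.one_le_rpow_of_pos_of_le_one_of_nonpos hε hε1 (by
    have : 0 < 1 / (2 * p) := by positivity
    linarith)
  have h1 : ε⁻¹ = u ^ (2 * p) := by
    rw [hu, ← Real.rpow_mul hε.le, ← Real.rpow_neg_one]; congr 1; field_simp
  have h2 : u ^ (2 * p) ≤ u ^ k := by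
    rw [← Real.rpow_natCast]
    exact Real.rpow_le_rpow_of_exponent_le hu1 (Nat.le_ceil _)
  have h3 := Real.pow_div_factorial_le_exp (u / 4) (by positivity) k
  rw [div_pow, div_div, div_le_iff₀ (by positivity)] at h3
  have h4 : ε⁻¹ ≤ Real.exp (u / 4) * (4 ^ k * k.factorial) := by linarith
  rw [Real.exp_neg, ← one_div, div_le_iff₀ (Real.exp_pos _)]
  rw [inv_le_iff_one_le_mul₀ hε] at h4
  linarith

section
variable {Ω : Type*} {mΩ : MeasurableSpace Ω} {μ : Measure Ω} {ℱ : Filtration ℕ mΩ}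
    {n : ℕ} {X c : ℕ → Ω → ℝ} {p ε : ℝ} [IsProbabilityMeasure μ]

lemma exists_d {u : Ω → ℝ} {m : MeasurableSpace Ω} (hu : ∀ ω, |u ω| ≤ 1) :
    ∃ d : Ω → ℝ, StronglyMeasurable[m] d ∧ (∀ ω, |d ω| ≤ 1) ∧ μ[u | m] =ᵐ[μ] d := by
  refine ⟨fun ω => max (-1) (min 1 ((μ[u | m]) ω)), ?_, ?_, ?_⟩
  · exact (stronglyMeasurable_const.sup (stronglyMeasurable_const.inf stronglyMeasurable_condExp))
  · intro ω
    rw [abs_le]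
    exact ⟨le_max_left _ _, max_le (by norm_num) (min_le_left _ _)⟩
  · have := ae_bdd_norm_condExp_of_ae_bdd_norm (m := m) (μ := μ) (R := 1) (f := u) (ae_of_all _ hu)
    filter_upwards [this] with ω hω
    rw [Real.norm_eq_abs, abs_le] at hω
    rw [min_eq_right hω.2, max_eq_right hω.1]

lemma exists_v {u : Ω → ℝ} {m : MeasurableSpace Ω} (hu : ∀ ω, 0 ≤ u ω) :
    ∃ d : Ω → ℝ, StronglyMeasurable[m] d ∧ (∀ ω, 0 ≤ d ω) ∧ μ[u | m] =ᵐ[μ] d := by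
  refine ⟨fun ω => max 0 ((μ[u | m]) ω), ?_, ?_, ?_⟩
  · exact (stronglyMeasurable_const.sup stronglyMeasurable_condExp)
  · intro ω; exact le_max_left _ _
  · have := condExp_nonneg (m := m) (μ := μ) (f := u) (ae_of_all _ hu)
    filter_upwards [this] with ω hω
    exact (max_eq_right hω).symm

lemma markov {f : Ω → ℝ} (hf : Integrable f μ) (h0 : ∀ ω, 0 ≤ f ω) {a B : ℝ} (ha : 0 < a)
    (hB : ∫ ω, f ω ∂μ ≤ B) : μ.real {ω | a < f ω} ≤ B / a := by
  have h1 := mul_meas_ge_le_integral_of_nonneg (ae_of_all _ h0) hf a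
  have h2 : μ.real {ω | a < f ω} ≤ μ.real {ω | a ≤ f ω} :=
    measureReal_mono (fun ω (hω : a < f ω) => hω.le)
  rw [le_div_iff₀ ha]
  nlinarith

end
end MBE

namespace MBE
set_option linter.unusedSectionVars false

section
variable {Ω : Type*} {mΩ : MeasurableSpace Ω} {μ : Measure Ω} {ℱ : Filtration ℕ mΩ}
    {n : ℕ} {X c : ℕ → Ω → ℝ} {p ε : ℝ} [IsProbabilityMeasure μ]

set_option maxHeartbeats 3200000 in
lemma Setup.qv (h : Setup μ ℱ n X c p ε) (hε4 : ε ≤ 1 / 4) :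
    μ.real {ω | ε / 2 < |∑ i ∈ range n, X i ω ^ 2 - ∑ i ∈ range n, c i ω|}
      ≤ 3 * ε + 2 * (Real.exp 3 * Real.exp (-(ε ^ (-(1 / (2 * p))) / 4))) := by
  have hε := h.hε
  have hε1 := h.hε1
  have hp := h.hp
  have hp0 : 0 < p := by linarith
  set θ : ℝ := ε ^ (-1 - 1 / (2 * p)) with hθ
  have hθ0 : 0 < θ := by positivity
  have hθε2 : θ * ε ^ 2 ≤ 1 := by
    rw [hθ, ← Real.rpow_two, ← Real.rpow_add hε]
    apply Real.rpow_le_one hε.le hε1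
    have : 1 / (2 * p) ≤ 1 := by rw [div_le_one (by positivity)]; linarith
    linarith
  have hθε : θ * ε = ε ^ (-(1 / (2 * p))) := by
    rw [hθ]; nth_rewrite 2 [← Real.rpow_one ε]; rw [← Real.rpow_add hε]; congr 1; ring
  have hθ2 : θ ^ 2 * ε ^ (2 + 1 / p) = 1 := by
    rw [hθ, ← Real.rpow_two, ← Real.rpow_mul hε.le, ← Real.rpow_add hε]
    have : (-1 - 1 / (2 * p)) * 2 + (2 + 1 / p) = 0 := by field_simp; ring
    rw [this, Real.rpow_zero]
  have hε3 : ε ^ (3 - 2 * p) * ε ^ (2 * p) ≤ ε ^ (2 + 1 / p) := by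
    rw [← Real.rpow_add hε]
    apply Real.rpow_le_rpow_of_exponent_ge hε hε1
    have : 1 / p ≤ 1 := by rw [div_le_one hp0]; linarith
    linarith
  have hε2 : ε ^ (2 - 2 * p) * ε ^ (2 * p) = ε ^ 2 := by
    rw [← Real.rpow_add hε, ← Real.rpow_two]; congr 1; ring
  -- the truncated variables
  set u : ℕ → Ω → ℝ := fun i ω => θ * xi ε (X i ω ^ 2) with hu
  have hu0 : ∀ i ω, 0 ≤ u i ω := fun i ω => mul_nonneg hθ0.le (xi_nn (sq_nonneg _))
  have hu1 : ∀ i ω, |u i ω| ≤ 1 := by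
    intro i ω
    rw [abs_of_nonneg (hu0 i ω)]
    refine le_trans ?_ hθε2
    exact mul_le_mul_of_nonneg_left xi_le2 hθ0.le
  have hum : ∀ i < n, StronglyMeasurable[ℱ (i + 1)] (u i) := by
    intro i hi
    exact (((xi_meas ε).comp ((h.meas i hi).measurable.pow_const 2)).const_mul θ).stronglyMeasurable
  have hui : ∀ i < n, Integrable (u i) μ := fun i hi =>
    Integrable.of_bound (C := 1) ((hum i hi).mono (ℱ.le _)).aestronglyMeasurable (ae_of_all _ (hu1 i))
  have hu2i : ∀ i < n, Integrable (fun ω => u i ω ^ 2) μ := fun i hi => by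
    refine Integrable.of_bound (C := 1) (((hum i hi).mono (ℱ.le _)).pow 2).aestronglyMeasurable
      (ae_of_all _ fun ω => ?_)
    rw [Real.norm_eq_abs, abs_pow]
    exact pow_le_one₀ (abs_nonneg _) (hu1 i ω)
  choose d hdm hd1 hd using fun i => exists_d (μ := μ) (m := ℱ i) (hu1 i)
  choose v hvm hv0 hv using fun i => exists_v (μ := μ) (u := fun ω => u i ω ^ 2) (m := ℱ i)
    (fun ω => sq_nonneg _)
  choose w hwm hw0 hw using fun i => exists_v (μ := μ) (u := fun ω => (X i ω ^ 2) ^ p) (m := ℱ i)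
    (fun ω => by positivity)
  -- conditional inequalities
  have lin : ∀ i < n, ∀ α β : ℝ, μ[fun ω => α * X i ω ^ 2 + β * (X i ω ^ 2) ^ p | ℱ i]
      =ᵐ[μ] fun ω => α * c i ω + β * w i ω := by
    intro i hi α β
    have a1 := condExp_add ((h.int2 i hi).const_mul α) ((h.intp i hi).const_mul β) (ℱ i)
    have a2 := condExp_smul (μ := μ) α (fun ω => X i ω ^ 2) (ℱ i)
    have a3 := condExp_smul (μ := μ) β (fun ω => (X i ω ^ 2) ^ p) (ℱ i)
    filter_upwards [a1, a2, a3, h.ceq i hi, hw i] with ω e1 e2 e3 e4 e5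
    refine e1.trans ?_
    have e2' : (μ[fun ω => α * X i ω ^ 2 | ℱ i]) ω = α * (μ[fun ω => X i ω ^ 2 | ℱ i]) ω := e2
    have e3' : (μ[fun ω => β * (X i ω ^ 2) ^ p | ℱ i]) ω
      = β * (μ[fun ω => (X i ω ^ 2) ^ p | ℱ i]) ω := e3
    rw [Pi.add_apply, e2', e3', e4, e5]
  have lini : ∀ i < n, ∀ α β : ℝ, Integrable (fun ω => α * X i ω ^ 2 + β * (X i ω ^ 2) ^ p) μ :=
    fun i hi α β => ((h.int2 i hi).const_mul α).add ((h.intp i hi).const_mul β)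
  have cd1 : ∀ i < n, ∀ᵐ ω ∂μ, d i ω ≤ θ * c i ω := by
    intro i hi
    have := condExp_mono (m := ℱ i) (hui i hi) (lini i hi θ 0) (ae_of_all _ fun ω => by
      have := mul_le_mul_of_nonneg_left (xi_le (ε := ε) (sq_nonneg (X i ω))) hθ0.le
      simp only [hu]; linarith)
    filter_upwards [this, hd i, lin i hi θ 0] with ω e1 e2 e3
    rw [e2, e3] at e1; linarith
  have cd2 : ∀ i < n, ∀ᵐ ω ∂μ, θ * c i ω - θ * ε ^ (2 - 2 * p) * w i ω ≤ d i ω := by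
    intro i hi
    have := condExp_mono (m := ℱ i) (lini i hi θ (- (θ * ε ^ (2 - 2 * p)))) (hui i hi)
      (ae_of_all _ fun ω => by
        have := mul_le_mul_of_nonneg_left (xi_low hε hp (sq_nonneg (X i ω))) hθ0.le
        simp only [hu]; linarith)
    filter_upwards [this, hd i, lin i hi θ (- (θ * ε ^ (2 - 2 * p)))] with ω e1 e2 e3
    rw [e2, e3] at e1; linarith
  have cv : ∀ i < n, ∀ᵐ ω ∂μ, v i ω ≤ c i ω + θ ^ 2 * ε ^ (3 - 2 * p) * w i ω := by
    intro i hi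
    have := condExp_mono (m := ℱ i) (hu2i i hi) (lini i hi 1 (θ ^ 2 * ε ^ (3 - 2 * p)))
      (ae_of_all _ fun ω => by
        have h1 := mul_le_mul_of_nonneg_left (xi_sq hε hε1 hp (sq_nonneg (X i ω))) (sq_nonneg θ)
        have h2 : θ ^ 2 * (ε ^ (2 + 1 / p) * X i ω ^ 2) = 1 * X i ω ^ 2 := by
          rw [← mul_assoc, hθ2]
        simp only [hu]
        rw [mul_pow]
        linarith)
    filter_upwards [this, hv i, lin i hi 1 (θ ^ 2 * ε ^ (3 - 2 * p))] with ω e1 e2 e3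
    rw [e2, e3] at e1; linarith
  have cdneg : ∀ i < n, μ[fun ω => - u i ω | ℱ i] =ᵐ[μ] fun ω => - d i ω := by
    intro i hi
    have h1 := condExp_neg (u i) (ℱ i) (μ := μ)
    filter_upwards [h1, hd i] with ω e1 e2
    have : (μ[fun ω => - u i ω | ℱ i]) ω = - (μ[u i | ℱ i]) ω := e1
    rw [this, e2]
  set a : ℝ := θ * ε / 4 - 3 with ha
  have T1 := exp_tail (n := n) (u := u) (d := d) (v := v) hum (fun i _ => hu1 i) (fun i _ => hdm i)
    (fun i _ => hd1 i) (fun i _ => hvm i) (fun i _ => hv0 i) (fun i _ => hd i) (fun i _ => hv i) a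
  have T2 := exp_tail (n := n) (u := fun i ω => - u i ω) (d := fun i ω => - d i ω) (v := v)
    (fun i hi => (hum i hi).neg) (fun i _ ω => by rw [abs_neg]; exact hu1 i ω) (fun i _ => (hdm i).neg)
    (fun i _ ω => by rw [abs_neg]; exact hd1 i ω) (fun i _ => hvm i) (fun i _ => hv0 i)
    cdneg (fun i _ => by simpa using hv i) a
  have ea : Real.exp (-a) = Real.exp 3 * Real.exp (-(ε ^ (-(1 / (2 * p))) / 4)) := by
    rw [← Real.exp_add, ha, hθε]; congr 1; ring
  rw [ea] at T1 T2
  set E1 : Set Ω := {ω | ε ^ (2 * p) < ∑ i ∈ range n, (X i ω ^ 2) ^ p} with hE1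
  set E2 : Set Ω := {ω | ε ^ (2 * p) < ∑ i ∈ range n, w i ω} with hE2
  set E3 : Set Ω := {ω | ε ^ 2 < |∑ i ∈ range n, c i ω - 1|} with hE3
  set E4 : Set Ω := {ω | a ≤ ∑ i ∈ range n, (u i ω - d i ω - v i ω)} with hE4
  set E5 : Set Ω := {ω | a ≤ ∑ i ∈ range n, (- u i ω - - d i ω - v i ω)} with hE5
  have hEp : 0 < ε ^ (2 * p) := by positivity
  have hdiv : ε ^ (2 * p + 1) / ε ^ (2 * p) = ε := by
    rw [Real.rpow_add hε, Real.rpow_one]; field_simp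
  have P1 : μ.real E1 ≤ ε := by
    rw [← hdiv]
    apply markov _ (fun ω => sum_nonneg fun i _ => by positivity) hEp
    · rw [integral_finsetSum _ (fun i hi => h.intp i (mem_range.1 hi))]; exact h.sum
    · exact integrable_finsetSum _ (fun i hi => h.intp i (mem_range.1 hi))
  have hwi : ∀ i ∈ range n, Integrable (w i) μ := fun i _ => integrable_condExp.congr (hw i)
  have P2 : μ.real E2 ≤ ε := by
    rw [← hdiv]
    apply markov (integrable_finsetSum _ hwi) (fun ω => sum_nonneg fun i _ => hw0 i ω) hEp
    rw [integral_finsetSum _ hwi]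
    refine le_trans (le_of_eq ?_) h.sum
    apply sum_congr rfl
    intro i _
    rw [← integral_congr_ae (hw i)]; exact integral_condExp (ℱ.le i)
  have P3 : μ.real E3 ≤ ε := h.dev
  -- a.e. inclusion
  have aeall : ∀ᵐ ω ∂μ, ∀ i < n, d i ω ≤ θ * c i ω ∧ θ * c i ω - θ * ε ^ (2 - 2 * p) * w i ω ≤ d i ω ∧
      v i ω ≤ c i ω + θ ^ 2 * ε ^ (3 - 2 * p) * w i ω := by
    rw [ae_all_iff]; intro i
    by_cases hi : i < n
    · filter_upwards [cd1 i hi, cd2 i hi, cv i hi] with ω e1 e2 e3 _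
      exact ⟨e1, e2, e3⟩
    · exact ae_of_all _ fun ω hi' => absurd hi' hi
  have incl : {ω | ε / 2 < |∑ i ∈ range n, X i ω ^ 2 - ∑ i ∈ range n, c i ω|}
      ≤ᵐ[μ] (E1 ∪ E2 ∪ E3 ∪ E4 ∪ E5 : Set Ω) := by
    filter_upwards [aeall] with ω hae hω
    by_contra hcon
    have hcon' : ω ∉ (E1 ∪ E2 ∪ E3 ∪ E4 ∪ E5 : Set Ω) := hcon
    simp only [Set.mem_union, not_or] at hcon'
    obtain ⟨⟨⟨⟨n1, n2⟩, n3⟩, n4⟩, n5⟩ := hcon'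
    simp only [hE1, hE2, hE3, hE4, hE5, Set.mem_ofPred_eq, not_lt, not_le] at n1 n2 n3 n4 n5
    have exi : ∀ i ∈ range n, u i ω = θ * X i ω ^ 2 := by
      intro i hi
      have h1 : (X i ω ^ 2) ^ p ≤ ε ^ (2 * p) :=
        (single_le_sum (f := fun i => (X i ω ^ 2) ^ p) (fun j _ => by positivity) hi).trans n1
      have h2 : X i ω ^ 2 ≤ ε ^ 2 := by
        rw [Real.rpow_mul hε.le, Real.rpow_two] at h1
        exact (Real.rpow_le_rpow_iff (sq_nonneg _) (sq_nonneg _) hp0).1 h1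
      simp only [hu, xi, if_pos h2]
    have su : ∑ i ∈ range n, u i ω = θ * ∑ i ∈ range n, X i ω ^ 2 := by
      rw [mul_sum]; exact sum_congr rfl exi
    have sd1 : ∑ i ∈ range n, d i ω ≤ θ * ∑ i ∈ range n, c i ω := by
      rw [mul_sum]; exact sum_le_sum fun i hi => (hae i (mem_range.1 hi)).1
    have sd2 : θ * ∑ i ∈ range n, c i ω - θ * ε ^ (2 - 2 * p) * ∑ i ∈ range n, w i ω
        ≤ ∑ i ∈ range n, d i ω := by
      rw [mul_sum, mul_sum, ← sum_sub_distrib]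
      exact sum_le_sum fun i hi => (hae i (mem_range.1 hi)).2.1
    have sv : ∑ i ∈ range n, v i ω ≤ ∑ i ∈ range n, c i ω
        + θ ^ 2 * ε ^ (3 - 2 * p) * ∑ i ∈ range n, w i ω := by
      rw [mul_sum, ← sum_add_distrib]
      exact sum_le_sum fun i hi => (hae i (mem_range.1 hi)).2.2
    have sw : θ ^ 2 * ε ^ (3 - 2 * p) * ∑ i ∈ range n, w i ω ≤ 1 := by
      calc θ ^ 2 * ε ^ (3 - 2 * p) * ∑ i ∈ range n, w i ω
          ≤ θ ^ 2 * ε ^ (3 - 2 * p) * ε ^ (2 * p) := by gcongr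
        _ = θ ^ 2 * (ε ^ (3 - 2 * p) * ε ^ (2 * p)) := by ring
        _ ≤ θ ^ 2 * ε ^ (2 + 1 / p) := by gcongr
        _ = 1 := hθ2
    have sw2 : θ * ε ^ (2 - 2 * p) * ∑ i ∈ range n, w i ω ≤ θ * ε ^ 2 := by
      calc θ * ε ^ (2 - 2 * p) * ∑ i ∈ range n, w i ω
          ≤ θ * ε ^ (2 - 2 * p) * ε ^ (2 * p) := by gcongr
        _ = θ * ε ^ 2 := by rw [mul_assoc, hε2]
    have hc2 : ∑ i ∈ range n, c i ω ≤ 2 := by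
      have := (abs_le.1 n3).2
      have h1 : ε ^ 2 ≤ 1 := pow_le_one₀ hε.le hε1
      linarith
    have s4 : ∑ i ∈ range n, (u i ω - d i ω - v i ω)
      = ∑ i ∈ range n, u i ω - ∑ i ∈ range n, d i ω - ∑ i ∈ range n, v i ω := by
      rw [sum_sub_distrib, sum_sub_distrib]
    have s5 : ∑ i ∈ range n, (- u i ω - - d i ω - v i ω)
      = - ∑ i ∈ range n, u i ω + ∑ i ∈ range n, d i ω - ∑ i ∈ range n, v i ω := by
      rw [sum_sub_distrib, sum_sub_distrib, sum_neg_distrib, sum_neg_distrib]; ring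
    rw [s4, su] at n4
    rw [s5, su] at n5
    set Q := ∑ i ∈ range n, X i ω ^ 2
    set R := ∑ i ∈ range n, c i ω
    have f1 : θ * (Q - R) ≤ θ * (ε / 4) := by linarith
    have f2 : θ * (R - Q) ≤ θ * (ε / 4 + ε ^ 2) := by linarith
    have g1 := le_of_mul_le_mul_left f1 hθ0
    have g2 := le_of_mul_le_mul_left f2 hθ0
    have hω' : ε / 2 < |Q - R| := hω
    have : |Q - R| ≤ ε / 2 := by
      have h1 : ε ^ 2 ≤ ε / 4 := by rw [pow_two]; linarith [mul_le_mul_of_nonneg_left hε4 hε.le]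
      rw [abs_le]; constructor <;> linarith
    linarith
  have hle : μ.real {ω | ε / 2 < |∑ i ∈ range n, X i ω ^ 2 - ∑ i ∈ range n, c i ω|}
      ≤ μ.real (E1 ∪ E2 ∪ E3 ∪ E4 ∪ E5) :=
    ENNReal.toReal_mono (measure_ne_top _ _) (measure_mono_ae incl)
  have r1 := measureReal_union_le (μ := μ) (E1 ∪ E2 ∪ E3 ∪ E4) E5
  have r2 := measureReal_union_le (μ := μ) (E1 ∪ E2 ∪ E3) E4
  have r3 := measureReal_union_le (μ := μ) (E1 ∪ E2) E3
  have r4 := measureReal_union_le (μ := μ) E1 E2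
  linarith

end
end MBE

namespace MBE

lemma ratio_aux {V ε : ℝ} (hε : 0 < ε) (h4 : ε ≤ 1 / 4) (hV : |V - 1| ≤ ε) :
    0 < Real.sqrt V ∧ Real.sqrt V ≤ 1 + 2 * ε ∧ 1 / (1 + 2 * ε) ≤ Real.sqrt V := by
  obtain ⟨h1, h2⟩ := abs_le.1 hV
  have hV0 : 0 < V := by linarith
  refine ⟨Real.sqrt_pos.2 hV0, ?_, ?_⟩
  · apply Real.sqrt_le_iff.2
    constructor
    · linarith
    · nlinarith
  · apply Real.le_sqrt_of_sq_le
    rw [div_pow, one_pow, div_le_iff₀ (by positivity)]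
    have : (1 - ε) * (1 + 2 * ε) ^ 2 ≤ V * (1 + 2 * ε) ^ 2 := by
      apply mul_le_mul_of_nonneg_right (by linarith) (by positivity)
    nlinarith [mul_pos hε hε, mul_nonneg (mul_pos hε hε).le (by linarith : 0 ≤ 1 / 4 - ε)]

theorem core (p : ℝ) (hp : 1 < p) : ∃ C : ℝ, 0 < C ∧
    ∀ (Ω : Type) (mΩ : MeasurableSpace Ω) (μ : Measure Ω) (_ : IsProbabilityMeasure μ)
      (ℱ : Filtration ℕ mΩ) (n : ℕ) (X c : ℕ → Ω → ℝ) (ε : ℝ), Setup μ ℱ n X c p ε → ε ≤ 1 / 4 →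
      ∀ t : ℝ, 0 ≤ t → t ≤ 1 →
      ∀ x, |μ.real {ω | (∑ i ∈ range n, X i ω) /
        Real.sqrt (t * (∑ i ∈ range n, c i ω) + (1 - t) * (∑ i ∈ range n, X i ω ^ 2)) ≤ x}
          - stdNormalCDF x| ≤ C * ε := by
  obtain ⟨C1, hC1, H1⟩ := boot p hp
  obtain ⟨C2, hC2, H2⟩ := exp_small p hp
  refine ⟨C1 + 2 + 1 + (3 + 2 * (Real.exp 3 * C2)), by positivity, ?_⟩
  intro Ω mΩ μ hμ ℱ n X c ε h h4 t ht0 ht1 x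
  have hε := h.hε
  have B := H1 Ω mΩ μ hμ ℱ n X c ε h
  have hG1 := h.dev
  have hG2 := h.qv h4
  have hE := H2 ε hε h.hε1
  have hE' : Real.exp 3 * Real.exp (-(ε ^ (-(1 / (2 * p))) / 4)) ≤ Real.exp 3 * (C2 * ε) :=
    mul_le_mul_of_nonneg_left hE (Real.exp_pos _).le
  set G1 : Set Ω := {ω | ε ^ 2 < |∑ i ∈ range n, c i ω - 1|} with hG1d
  set G2 : Set Ω := {ω | ε / 2 < |∑ i ∈ range n, X i ω ^ 2 - ∑ i ∈ range n, c i ω|} with hG2d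
  have hG : μ.real (G1 ∪ G2) ≤ (1 + (3 + 2 * (Real.exp 3 * C2))) * ε := by
    have := measureReal_union_le (μ := μ) G1 G2
    linarith
  have hr : 1 ≤ 1 + 2 * ε := by linarith
  set r := 1 + 2 * ε with hrd
  have hr0 : 0 < r := by linarith
  have good : ∀ ω, ω ∉ G1 ∪ G2 → 
      0 < Real.sqrt (t * (∑ i ∈ range n, c i ω) + (1 - t) * (∑ i ∈ range n, X i ω ^ 2)) ∧
      Real.sqrt (t * (∑ i ∈ range n, c i ω) + (1 - t) * (∑ i ∈ range n, X i ω ^ 2)) ≤ r ∧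
      1 / r ≤ Real.sqrt (t * (∑ i ∈ range n, c i ω) + (1 - t) * (∑ i ∈ range n, X i ω ^ 2)) := by
    intro ω hω
    simp only [Set.mem_union, not_or, hG1d, hG2d, Set.mem_ofPred_eq, not_lt] at hω
    obtain ⟨w1, w2⟩ := hω
    apply ratio_aux hε h4
    set R := ∑ i ∈ range n, c i ω
    set Q := ∑ i ∈ range n, X i ω ^ 2
    have e : t * R + (1 - t) * Q - 1 = (R - 1) + (1 - t) * (Q - R) := by ring
    rw [e]
    have h1 := abs_add_le (R - 1) ((1 - t) * (Q - R))
    rw [abs_mul, abs_of_nonneg (by linarith : 0 ≤ 1 - t)] at h1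
    have h2 : (1 - t) * |Q - R| ≤ 1 * |Q - R| :=
      mul_le_mul_of_nonneg_right (by linarith) (abs_nonneg _)
    have h3 : ε ^ 2 ≤ ε / 4 := by rw [pow_two]; linarith [mul_le_mul_of_nonneg_left h4 hε.le]
    linarith
  have s1 := abs_le.1 (cdf_scale x hr)
  have s2 := abs_le.1 (cdf_scale (x / r) hr)
  rw [div_mul_cancel₀ _ hr0.ne'] at s2
  -- existence of the bracketing points
  have br : ∃ a b : ℝ, stdNormalCDF b - stdNormalCDF x ≤ 2 * ε ∧ stdNormalCDF x - stdNormalCDF a ≤ 2 * ε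
      ∧ ∀ s, s ≤ r → 1 / r ≤ s → a ≤ x * s ∧ x * s ≤ b := by
    rcases le_total 0 x with hx | hx
    · refine ⟨x / r, x * r, by linarith, by linarith, fun s hs1 hs2 => ⟨?_, ?_⟩⟩
      · rw [div_eq_mul_one_div]; exact mul_le_mul_of_nonneg_left hs2 hx
      · exact mul_le_mul_of_nonneg_left hs1 hx
    · refine ⟨x * r, x / r, by linarith, by linarith, fun s hs1 hs2 => ⟨?_, ?_⟩⟩
      · exact mul_le_mul_of_nonpos_left hs1 hx
      · rw [div_eq_mul_one_div]; exact mul_le_mul_of_nonpos_left hs2 hx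
  obtain ⟨a, b, hb, ha, hab⟩ := br
  have u1 : μ.real {ω | (∑ i ∈ range n, X i ω) /
        Real.sqrt (t * (∑ i ∈ range n, c i ω) + (1 - t) * (∑ i ∈ range n, X i ω ^ 2)) ≤ x}
      ≤ μ.real {ω | ∑ i ∈ range n, X i ω ≤ b} + μ.real (G1 ∪ G2) := by
    apply real_sub_le
    intro ω hω
    by_cases hg : ω ∈ G1 ∪ G2
    · exact Or.inr hg
    · left
      obtain ⟨g0, g1, g2⟩ := good ω hg
      have h1 := (div_le_iff₀ g0).1 hω
      exact h1.trans (hab _ g1 g2).2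
  have u2 : μ.real {ω | ∑ i ∈ range n, X i ω ≤ a} ≤ μ.real {ω | (∑ i ∈ range n, X i ω) /
        Real.sqrt (t * (∑ i ∈ range n, c i ω) + (1 - t) * (∑ i ∈ range n, X i ω ^ 2)) ≤ x}
       + μ.real (G1 ∪ G2) := by
    apply real_sub_le
    intro ω hω
    by_cases hg : ω ∈ G1 ∪ G2
    · exact Or.inr hg
    · left
      obtain ⟨g0, g1, g2⟩ := good ω hg
      exact (div_le_iff₀ g0).2 (le_trans hω (hab _ g1 g2).1)
  have b1 := abs_le.1 (B a)
  have b2 := abs_le.1 (B b)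
  rw [abs_le]
  constructor <;> linarith

end MBE

namespace MBE

lemma sumIcc (f : ℕ → ℝ) (n : ℕ) : ∑ i ∈ Icc 1 n, f i = ∑ i ∈ range n, f (i + 1) := by
  induction n with
  | zero => simp
  | succ k ih => rw [sum_Icc_succ_top (by omega), ih, sum_range_succ]

lemma abs_rpow_two_mul (x p : ℝ) : |x| ^ (2 * p) = (x ^ 2) ^ p := by
  rw [Real.rpow_mul (abs_nonneg _), Real.rpow_two, sq_abs]

lemma dev_int {Ω : Type*} {mΩ : MeasurableSpace Ω} {μ : Measure Ω} [IsProbabilityMeasure μ]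
    (ℱ : Filtration ℕ mΩ) {p : ℝ} (hp : 1 < p) (n : ℕ) (Y : ℕ → Ω → ℝ)
    (hY : ∀ i < n, Integrable (fun ω => (Y i ω ^ 2) ^ p) μ) :
    Integrable (fun ω => |∑ i ∈ range n, (μ[fun ω' => Y i ω' ^ 2 | ℱ i]) ω - 1| ^ p) μ := by
  have hp0 : 0 < p := by linarith
  have h1 : ∀ i ∈ range n, MemLp (μ[fun ω' => Y i ω' ^ 2 | ℱ i]) (ENNReal.ofReal p) μ := by
    intro i hi
    have e0 : (fun ω => ‖Y i ω ^ 2‖ ^ p) = fun ω => (Y i ω ^ 2) ^ p := by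
      funext ω; rw [Real.norm_eq_abs, abs_of_nonneg (sq_nonneg _)]
    have hi0 : Integrable (fun ω => ‖Y i ω ^ 2‖ ^ p) μ := by rw [e0]; exact hY i (mem_range.1 hi)
    have h1 := Integrable.norm_condExp_rpow_le (m := ℱ i) hp.le hi0
    refine (integrable_norm_rpow_iff ?_ ?_ ?_).1 ?_
    · exact (stronglyMeasurable_condExp.mono (ℱ.le i)).aestronglyMeasurable
    · simpa using hp0
    · simp
    · rw [ENNReal.toReal_ofReal hp0.le]; 
      refine Integrable.mono' integrable_condExp ?_ ?_ (g := μ[fun ω => ‖Y i ω ^ 2‖ ^ p | ℱ i])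
      · exact ((stronglyMeasurable_condExp.mono (ℱ.le i)).measurable.norm.pow_const p).aestronglyMeasurable
      · filter_upwards [h1] with ω e
        rw [Real.norm_eq_abs, abs_of_nonneg (by positivity)]; exact e
  have h2 := (memLp_finsetSum _ h1).sub (memLp_const (1:ℝ))
  have h3 := h2.integrable_norm_rpow (by simpa using hp0) (by simp)
  rw [ENNReal.toReal_ofReal hp0.le] at h3
  exact h3

end MBE

theorem stmt2 (p : ℝ) (hp : 1 < p) :
    ∃ C : ℝ, 0 < C ∧
      ∀ (Ω : Type) (mΩ : MeasurableSpace Ω) (μ : Measure Ω),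
        IsProbabilityMeasure μ →
        ∀ (ℱ : Filtration ℕ mΩ), ℱ 0 = ⊥ →
        ∀ (n : ℕ) (X : ℕ → Ω → ℝ), X 0 = 0 →
        (∀ i, StronglyMeasurable[ℱ i] (X i)) →
        (∀ i, Integrable (X i) μ) →
        (∀ i ∈ Finset.Icc 1 n, μ[X i | ℱ (i - 1)] =ᵐ[μ] (0 : Ω → ℝ)) →
        ∀ (S : ℕ → Ω → ℝ), (∀ k ω, S k ω = ∑ i ∈ Finset.Icc 1 k, X i ω) →
        ∀ (QV CV : Ω → ℝ),
          (∀ ω, QV ω = ∑ i ∈ Finset.Icc 1 n, (X i ω) ^ 2) →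
          (∀ ω, CV ω = ∑ i ∈ Finset.Icc 1 n, (μ[fun ω' => (X i ω') ^ 2 | ℱ (i - 1)]) ω) →
        (∫ ω, (S n ω) ^ 2 ∂μ) = 1 →
        (∀ i ∈ Finset.Icc 1 n, Integrable (fun ω => |X i ω| ^ (2 * p)) μ) →
        ∀ (N : ℝ),
          N = (∑ i ∈ Finset.Icc 1 n, ∫ ω, |X i ω| ^ (2 * p) ∂μ) + (∫ ω, |CV ω - 1| ^ p ∂μ) →
      ∀ t : ℝ, 0 ≤ t → t ≤ 1 →
      ∀ x : ℝ,
        |(μ {ω | S n ω / Real.sqrt (t * CV ω + (1 - t) * QV ω) ≤ x}).toReal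
          - stdNormalCDF x| ≤ C * N ^ (1 / (2 * p + 1)) := by
  have hp0 : 0 < p := by linarith
  obtain ⟨C, hC, H⟩ := MBE.core p hp
  refine ⟨C + 4, by linarith, ?_⟩
  intro Ω mΩ μ hμ ℱ _ n X _ hm hInteg hz S hS QV CV hQV hCV _ hXp N hN t ht0 ht1 x
  have mem : ∀ i < n, i + 1 ∈ Finset.Icc 1 n := fun i hi => Finset.mem_Icc.2 ⟨by omega, by omega⟩
  simp only [MBE.sumIcc, Nat.add_sub_cancel, MBE.abs_rpow_two_mul] at hS hQV hCV hN
  have hXp' : ∀ i < n, Integrable (fun ω => (X (i + 1) ω ^ 2) ^ p) μ := by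
    intro i hi
    have := hXp (i + 1) (mem i hi)
    simpa only [MBE.abs_rpow_two_mul] using this
  have hdi := MBE.dev_int (μ := μ) ℱ hp n (fun i => X (i + 1)) hXp'
  choose c hcm hc0 hc using fun i => MBE.exists_v (μ := μ) (u := fun ω => X (i + 1) ω ^ 2)
    (m := ℱ i) (fun ω => sq_nonneg _)
  have hCVc : ∀ᵐ ω ∂μ, CV ω = ∑ i ∈ range n, c i ω := by
    have : ∀ᵐ ω ∂μ, ∀ i, (μ[fun ω' => X (i + 1) ω' ^ 2 | ℱ i]) ω = c i ω := ae_all_iff.2 hc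
    filter_upwards [this] with ω hω
    rw [hCV]; exact sum_congr rfl fun i _ => hω i
  have hs0 : 0 ≤ ∑ i ∈ range n, ∫ ω, (X (i + 1) ω ^ 2) ^ p ∂μ :=
    sum_nonneg fun i _ => integral_nonneg fun ω => Real.rpow_nonneg (sq_nonneg _) _
  have hd0 : 0 ≤ ∫ ω, |CV ω - 1| ^ p ∂μ :=
    integral_nonneg fun ω => Real.rpow_nonneg (abs_nonneg _) _
  have hN0 : 0 ≤ N := by rw [hN]; exact add_nonneg hs0 hd0
  have hdi' : Integrable (fun ω => |CV ω - 1| ^ p) μ := by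
    have e : (fun ω => |CV ω - 1| ^ p) = fun ω =>
        |∑ i ∈ range n, (μ[fun ω' => X (i + 1) ω' ^ 2 | ℱ i]) ω - 1| ^ p := by
      funext ω; rw [hCV]
    rw [e]; exact hdi
  have key : ∀ ε : ℝ, 0 < ε → N ≤ ε ^ (2 * p + 1) →
      |(μ {ω | S n ω / Real.sqrt (t * CV ω + (1 - t) * QV ω) ≤ x}).toReal - stdNormalCDF x|
        ≤ (C + 4) * ε := by
    intro ε hε hNε
    by_cases h4 : ε ≤ 1 / 4
    · have hsetup : MBE.Setup μ ℱ n (fun i => X (i + 1)) c p ε := by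
        refine ⟨hp, hε, by linarith, fun i _ => hm (i + 1), fun i _ => hInteg (i + 1), ?_, hXp',
          fun i _ => hcm i, fun i _ => hc0 i, fun i _ => hc i, ?_, ?_⟩
        · intro i hi
          have := hz (i + 1) (mem i hi)
          simpa using this
        · linarith
        · have hEp : 0 < ε ^ (2 * p) := by positivity
          have hdiv : ε ^ (2 * p + 1) / ε ^ (2 * p) = ε := by
            rw [Real.rpow_add hε, Real.rpow_one]; field_simp
          have h1 := MBE.markov hdi' (fun ω => Real.rpow_nonneg (abs_nonneg _) _) hEp
            (B := ε ^ (2 * p + 1)) (by linarith)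
          rw [hdiv] at h1
          refine le_trans ?_ h1
          apply ENNReal.toReal_mono (measure_ne_top _ _)
          apply measure_mono_ae
          filter_upwards [hCVc] with ω hω hlt
          have hlt' : ε ^ 2 < |∑ i ∈ range n, c i ω - 1| := hlt
          show ε ^ (2 * p) < |CV ω - 1| ^ p
          rw [hω, Real.rpow_mul hε.le, Real.rpow_two]
          exact Real.rpow_lt_rpow (sq_nonneg _) hlt' hp0
      have h1 := H Ω mΩ μ hμ ℱ n _ c ε hsetup h4 t ht0 ht1 x
      have e : (μ {ω | S n ω / Real.sqrt (t * CV ω + (1 - t) * QV ω) ≤ x}).toReal =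
          μ.real {ω | (∑ i ∈ range n, X (i + 1) ω) /
        Real.sqrt (t * (∑ i ∈ range n, c i ω) + (1 - t) * (∑ i ∈ range n, X (i + 1) ω ^ 2)) ≤ x} := by
        unfold Measure.real
        congr 1
        apply measure_congr
        rw [eventuallyEq_set]
        filter_upwards [hCVc] with ω hω
        simp only [hS, hω, hQV]
      rw [e]
      refine h1.trans ?_
      nlinarith
    · have a1 : 0 ≤ (μ {ω | S n ω / Real.sqrt (t * CV ω + (1 - t) * QV ω) ≤ x}).toReal :=
        ENNReal.toReal_nonneg
      have a2 : (μ {ω | S n ω / Real.sqrt (t * CV ω + (1 - t) * QV ω) ≤ x}).toReal ≤ 1 :=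
        measureReal_le_one
      have a3 := MBE.cdf_nonneg x
      have a4 := MBE.cdf_le_one x
      have a5 : 1 ≤ (C + 4) * ε := by
        have := mul_pos hC hε
        push Not at h4
        linarith
      rw [abs_le]; constructor <;> linarith
  rcases hN0.eq_or_lt with h0 | hpos
  · rw [← h0, Real.zero_rpow (by positivity), mul_zero]
    apply le_of_forall_pos_le_add
    intro δ hδ
    have := key (δ / (C + 4)) (by positivity) (by rw [← h0]; positivity)
    rw [mul_div_cancel₀ _ (by linarith : C + 4 ≠ 0)] at this
    linarith
  · apply key _ (by positivity)
    rw [← Real.rpow_mul hN0, one_div, inv_mul_cancel₀ (by positivity), Real.rpow_one]
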